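/- arXiv:math/0406013 — 6 statements merged into one kernel-verified Lean document; each statement's English description precedes it below -/
import Mathlib

section
/- Let m ≥ 2, let F_m be a free group with free basis A of size m, and let φ : F_m → ℤ be a surjective homomorphism. Let a ∈ A ∪ A^{-1} be a letter with φ(a) maximal among all letters of A ∪ A^{-1}. Then for every k ≥ 4, the number d_k of good words of length k satisfies d_k ≥ 4m(m-1)²(2m-1)^{k-4}. -/
open Filter Topology

/-- A word over the alphabet `A^{±1}` (a letter is a pair `(i, b)`, where `b = true`
means the generator `i` and `b = false` means its inverse) is freely reduced iff
it is its own free reduction. -/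
def IsReducedWord {m : ℕ} (w : List (Fin m × Bool)) : Prop :=
  FreeGroup.reduce w = w

/-- A *good* word w.r.t. `φ : F_m → ℤ` and the letter `a`: it is freely reduced,
its first letter is `a`, its last letter is not `a⁻¹`, and its `φ`-value is positive. -/
def IsGoodWord {m : ℕ} (φ : FreeGroup (Fin m) → ℤ) (a : Fin m × Bool)
    (w : List (Fin m × Bool)) : Prop :=
  IsReducedWord w ∧ w.head? = some a ∧ w.getLast? ≠ some (a.1, !a.2) ∧
    0 < φ (FreeGroup.mk w)

namespace GW

abbrev Let (m : ℕ) := Fin m × Bool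

def bar {m : ℕ} (x : Let m) : Let m := (x.1, !x.2)

@[simp] lemma bar_bar {m : ℕ} (x : Let m) : bar (bar x) = x := by simp [bar]

lemma bar_ne {m : ℕ} (x : Let m) : bar x ≠ x := by
  intro h
  have := congrArg Prod.snd h
  simp [bar] at this

lemma bar_inj {m : ℕ} {x y : Let m} (h : bar x = bar y) : x = y := by
  rw [← bar_bar x, h, bar_bar]

def Rel {m : ℕ} (x y : Let m) : Prop := y ≠ bar x

lemma rel_bar {m : ℕ} {x y : Let m} (h : Rel x y) : Rel (bar x) (bar y) :=
  fun e => h (bar_inj e)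

lemma reduced_of_chain {m : ℕ} {w : List (Let m)} (h : w.IsChain Rel) : IsReducedWord w := by
  unfold IsReducedWord
  rw [← FreeGroup.isReduced_iff_reduce_eq]
  refine h.imp ?_
  rintro ⟨i, b⟩ ⟨j, c⟩ h e
  simp only [Rel, bar, ne_eq, Prod.mk.injEq, not_and] at h
  have := h e.symm
  cases b <;> cases c <;> simp_all

/-- flip everything but the trailing `a`s -/
def flipR {m : ℕ} (a : Let m) : List (Let m) → List (Let m)
  | [] => []
  | x :: t => if ∀ y ∈ x :: t, y = a then x :: t else bar x :: flipR a t

/-- flip everything but the leading and trailing `a`s -/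
def flipL {m : ℕ} (a : Let m) : List (Let m) → List (Let m)
  | [] => []
  | x :: t => if x = a then x :: flipL a t else flipR a (x :: t)

lemma flipR_all {m : ℕ} {a : Let m} {t : List (Let m)} (h : ∀ y ∈ t, y = a) :
    flipR a t = t := by
  cases t with
  | nil => rfl
  | cons x t => rw [flipR, if_pos h]

lemma flipR_not {m : ℕ} {a x : Let m} {t : List (Let m)} (h : ¬ ∀ y ∈ x :: t, y = a) :
    flipR a (x :: t) = bar x :: flipR a t := by
  rw [flipR, if_neg h]

lemma flipR_length {m : ℕ} (a : Let m) (t : List (Let m)) :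
    (flipR a t).length = t.length := by
  induction t with
  | nil => rfl
  | cons x t ih => rw [flipR]; split_ifs <;> simp [ih]

lemma flipL_length {m : ℕ} (a : Let m) (t : List (Let m)) :
    (flipL a t).length = t.length := by
  induction t with
  | nil => rfl
  | cons x t ih => rw [flipL]; split_ifs <;> simp [ih, flipR_length]

lemma flipR_spec {m : ℕ} (a : Let m) (t : List (Let m)) (hc : t.IsChain Rel)
    (hl : t.getLast? ≠ some (bar a)) :
    (flipR a t).IsChain Rel ∧ (flipR a t).getLast? ≠ some (bar a) ∧
      ((∀ y ∈ flipR a t, y = a) → ∀ y ∈ t, y = a) ∧ flipR a (flipR a t) = t := by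
  induction t with
  | nil => simp [flipR]
  | cons x t ih =>
    by_cases h : ∀ y ∈ x :: t, y = a
    · rw [flipR_all h, flipR_all h]
      exact ⟨hc, hl, id, rfl⟩
    · rw [flipR_not h]
      cases t with
      | nil =>
        have hx : x ≠ a := by simpa using h
        have hx' : x ≠ bar a := by simpa using hl
        have hb : bar x ≠ a := fun e => hx' (by rw [← e, bar_bar])
        have hb' : bar x ≠ bar a := fun e => hx (bar_inj e)
        refine ⟨by simp [flipR], by simpa [flipR] using hb', by simp [flipR, hb], ?_⟩
        rw [flipR_not (by simp [flipR, hb])]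
        simp [flipR]
      | cons z s =>
        rw [List.isChain_cons_cons] at hc
        have hl' : (z :: s).getLast? ≠ some (bar a) := by simpa using hl
        obtain ⟨i1, i2, i3, i4⟩ := ih hc.2 hl'
        have hall : ¬ ∀ y ∈ bar x :: flipR a (z :: s), y = a := by
          intro hh
          have h1 : bar x = a := hh _ (by simp)
          have h2 := i3 (fun y hy => hh y (by simp [hy]))
          apply hc.1
          rw [h1]
          exact h2 z (by simp)
        refine ⟨?_, ?_, fun hh => absurd hh hall, ?_⟩
        · by_cases hz : ∀ y ∈ z :: s, y = a
          · rw [flipR_all hz]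
            rw [List.isChain_cons_cons]
            refine ⟨?_, hc.2⟩
            have hza : z = a := hz z (by simp)
            intro e
            rw [bar_bar] at e
            apply h
            intro y hy
            rcases List.mem_cons.1 hy with rfl | hy
            · rw [← e, hza]
            · exact hz y hy
          · rw [flipR_not hz] at i1 ⊢
            rw [List.isChain_cons_cons]
            exact ⟨rel_bar hc.1, i1⟩
        · have hne : flipR a (z :: s) ≠ [] := by
            intro e
            have := flipR_length a (z :: s)
            simp [e] at this
          obtain ⟨u, v, huv⟩ := List.exists_cons_of_ne_nil hne
          rw [huv] at i2 ⊢
          simpa using i2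
        · rw [flipR_not hall, i4, bar_bar]

lemma flipL_spec {m : ℕ} (a : Let m) (t : List (Let m)) (hc : (a :: t).IsChain Rel)
    (hl : (a :: t).getLast? ≠ some (bar a)) :
    (a :: flipL a t).IsChain Rel ∧ (a :: flipL a t).getLast? ≠ some (bar a) ∧
      flipL a (flipL a t) = t := by
  induction t with
  | nil => exact ⟨hc, hl, rfl⟩
  | cons x t ih =>
    rw [List.isChain_cons_cons] at hc
    have hl' : (x :: t).getLast? ≠ some (bar a) := by simpa using hl
    by_cases hx : x = a
    · subst hx
      obtain ⟨i1, i2, i3⟩ := ih hc.2 hl'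
      have e : flipL x (x :: t) = x :: flipL x t := by rw [flipL, if_pos rfl]
      rw [e]
      refine ⟨?_, by simpa using i2, ?_⟩
      · rw [List.isChain_cons_cons]; exact ⟨hc.1, i1⟩
      · rw [flipL, if_pos rfl, i3]
    · have e : flipL a (x :: t) = flipR a (x :: t) := by rw [flipL, if_neg hx]
      have hn : ¬ ∀ y ∈ x :: t, y = a := fun h => hx (h x (by simp))
      obtain ⟨i1, i2, _, i4⟩ := flipR_spec a (x :: t) hc.2 hl'
      rw [e]
      rw [flipR_not hn] at i1 i2 i4 ⊢
      have hb : bar x ≠ a := fun h => hc.1 (by rw [← h, bar_bar])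
      refine ⟨?_, by simpa using i2, ?_⟩
      · rw [List.isChain_cons_cons]
        exact ⟨fun h => hx (bar_inj h), i1⟩
      · rw [flipL, if_neg hb, i4]

section val
variable {m : ℕ} (f : Let m → ℤ) (a : Let m)

lemma flipR_sum (hf : ∀ x, f (bar x) = - f x) (ha : 0 ≤ f a) (t : List (Let m)) :
    - (t.map f).sum ≤ ((flipR a t).map f).sum := by
  induction t with
  | nil => simp [flipR]
  | cons x t ih =>
    by_cases h : ∀ y ∈ x :: t, y = a
    · rw [flipR_all h]
      have : 0 ≤ ((x :: t).map f).sum := by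
        apply List.sum_nonneg
        intro z hz
        obtain ⟨y, hy, rfl⟩ := List.mem_map.1 hz
        rw [h y hy]; exact ha
      linarith
    · rw [flipR_not h]
      simp only [List.map_cons, List.sum_cons, hf]
      linarith

lemma flipL_sum (hf : ∀ x, f (bar x) = - f x) (ha : 0 ≤ f a) (t : List (Let m)) :
    - (t.map f).sum ≤ ((flipL a t).map f).sum := by
  induction t with
  | nil => simp [flipL]
  | cons x t ih =>
    by_cases h : x = a
    · rw [flipL, if_pos h]
      subst h
      simp only [List.map_cons, List.sum_cons]
      linarith
    · rw [flipL, if_neg h]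
      exact flipR_sum f a hf ha _

end val

/-- continuations of length `l + 1` of the letter `x`, not ending with `a⁻¹` -/
def W {m : ℕ} (a : Let m) : ℕ → Let m → Finset (List (Let m))
  | 0, x => ((Finset.univ.erase (bar x)).erase (bar a)).image fun y => [y]
  | l + 1, x => (Finset.univ.erase (bar x)).biUnion fun y => (W a l y).image (List.cons y)

lemma W_mem {m : ℕ} (a : Let m) (l : ℕ) : ∀ (x : Let m) (t : List (Let m)), t ∈ W a l x →
    t.length = l + 1 ∧ (x :: t).IsChain Rel ∧ (x :: t).getLast? ≠ some (bar a) := by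
  induction l with
  | zero =>
    intro x t h
    simp only [W, Finset.mem_image, Finset.mem_erase] at h
    obtain ⟨y, hy, rfl⟩ := h
    refine ⟨rfl, ?_, by simpa using hy.1⟩
    rw [List.isChain_cons_cons]
    exact ⟨hy.2.1, by simp⟩
  | succ l ih =>
    intro x t h
    simp only [W, Finset.mem_biUnion, Finset.mem_image, Finset.mem_erase] at h
    obtain ⟨y, hy, s, hs, rfl⟩ := h
    obtain ⟨h1, h2, h3⟩ := ih y s hs
    refine ⟨by simp [h1], ?_, by simpa using h3⟩
    rw [List.isChain_cons_cons]
    exact ⟨hy.1, h2⟩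

lemma W_card {m : ℕ} (a : Let m) (l : ℕ) : ∀ (x : Let m),
    (2 * m - 2) * (2 * m - 1) ^ l ≤ (W a l x).card := by
  have hu : (Finset.univ : Finset (Let m)).card = 2 * m := by
    simp [Fintype.card_prod, mul_comm]
  induction l with
  | zero =>
    intro x
    rw [W, Finset.card_image_of_injective _ (fun a b h => by simpa using h)]
    have h1 : (Finset.univ.erase (bar x)).card = 2 * m - 1 := by
      rw [Finset.card_erase_of_mem (Finset.mem_univ _), hu]
    have h2 := Finset.pred_card_le_card_erase (s := Finset.univ.erase (bar x)) (a := bar a)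
    simp only [pow_zero, mul_one]
    omega
  | succ l ih =>
    intro x
    rw [W, Finset.card_biUnion]
    · have h1 : (Finset.univ.erase (bar x)).card = 2 * m - 1 := by
        rw [Finset.card_erase_of_mem (Finset.mem_univ _), hu]
      calc (2 * m - 2) * (2 * m - 1) ^ (l + 1)
          = ∑ y ∈ Finset.univ.erase (bar x), (2 * m - 2) * (2 * m - 1) ^ l := by
            rw [Finset.sum_const, h1, smul_eq_mul]; ring
        _ ≤ _ := by
            apply Finset.sum_le_sum
            intro y _
            rw [Finset.card_image_of_injective _ List.cons_injective]
            exact ih y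
    · intro y _ z _ hyz
      rw [Function.onFun, Finset.disjoint_left]
      intro t h1 h2
      obtain ⟨s, _, rfl⟩ := Finset.mem_image.1 h1
      obtain ⟨s', _, h⟩ := Finset.mem_image.1 h2
      exact hyz (List.cons.inj h).1.symm

end GW

/-- Lemma 1, first part. Let `m ≥ 2`, let `F_m` be the free group with
free basis `A` of size `m` and let `φ : F_m → ℤ` be a surjective homomorphism. If the letter
`a ∈ A^{±1}` has maximal `φ`-value among all letters, then for every `k ≥ 4` the number `d_k`
of good words of length `k` satisfies `d_k ≥ 4m(m-1)²(2m-1)^(k-4)`. -/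
theorem good_words_count_lower_bound (m k : ℕ) (hm : 2 ≤ m) (hk : 4 ≤ k)
    (φ : FreeGroup (Fin m) → ℤ)
    (hφ : ∀ x y : FreeGroup (Fin m), φ (x * y) = φ x + φ y)
    (hsurj : Function.Surjective φ)
    (a : Fin m × Bool)
    (ha : ∀ ℓ : Fin m × Bool, φ (FreeGroup.mk [ℓ]) ≤ φ (FreeGroup.mk [a])) :
    4 * m * (m - 1) ^ 2 * (2 * m - 1) ^ (k - 4) ≤
      Set.ncard {w : List (Fin m × Bool) | w.length = k ∧ IsGoodWord φ a w} := by
  classical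
  have h1 : φ 1 = 0 := by
    have := hφ 1 1
    rw [mul_one] at this
    linarith
  have hinv : ∀ x, φ (FreeGroup.mk [GW.bar x]) = - φ (FreeGroup.mk [x]) := by
    intro x
    have h2 := hφ (FreeGroup.mk [x]) (FreeGroup.mk [x])⁻¹
    rw [mul_inv_cancel, h1] at h2
    have h3 : (FreeGroup.mk [x])⁻¹ = FreeGroup.mk [GW.bar x] := by
      simp [FreeGroup.inv_mk, FreeGroup.invRev, GW.bar]
    rw [h3] at h2
    linarith
  set f : GW.Let m → ℤ := fun x => φ (FreeGroup.mk [x]) with hf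
  have hsum : ∀ w : List (GW.Let m), φ (FreeGroup.mk w) = (w.map f).sum := by
    intro w
    induction w with
    | nil => simpa [FreeGroup.one_eq_mk] using h1
    | cons x t ih =>
      have : FreeGroup.mk (x :: t) = FreeGroup.mk [x] * FreeGroup.mk t := by
        simp [FreeGroup.mul_mk]
      rw [this, hφ, ih]
      simp [hf]
  have hpos : 0 < f a := by
    by_contra hn
    have hz : ∀ x, f x = 0 := by
      intro x
      have e1 : f x ≤ f a := ha x
      have e2 : f (GW.bar x) ≤ f a := ha (GW.bar x)
      have e3 : f (GW.bar x) = - f x := hinv x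
      linarith
    obtain ⟨g, hg⟩ := hsurj 1
    have e : φ (FreeGroup.mk g.toWord) = 1 := by rw [FreeGroup.mk_toWord, hg]
    rw [hsum] at e
    have : (g.toWord.map f).sum = 0 := by
      apply List.sum_eq_zero
      intro z hz'
      obtain ⟨y, _, rfl⟩ := List.mem_map.1 hz'
      exact hz y
    omega
  set G := {w : List (Fin m × Bool) | w.length = k ∧ IsGoodWord φ a w} with hG
  have hfin : G.Finite := (List.finite_length_eq (Fin m × Bool) k).subset fun w hw => hw.1
  have hgood : ∀ t : List (GW.Let m), t.length = k - 2 + 1 → (a :: t).IsChain GW.Rel →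
      (a :: t).getLast? ≠ some (GW.bar a) → 0 < f a + (t.map f).sum → a :: t ∈ G := by
    intro t e1 e2 e3 e4
    refine ⟨by simp [e1]; omega, GW.reduced_of_chain e2, rfl, e3, ?_⟩
    rw [hsum]
    simpa using e4
  let P : List (GW.Let m) → Prop := fun t => 0 < f a + (t.map f).sum
  have c1 : ((GW.W a (k - 2) a).filter P).card ≤ G.ncard := by
    rw [← Set.ncard_coe_finset]
    refine Set.ncard_le_ncard_of_injOn (fun t => a :: t) ?_ ?_ hfin
    · intro t ht
      obtain ⟨h, hp⟩ := Finset.mem_filter.1 (Finset.mem_coe.1 ht)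
      obtain ⟨i1, i2, i3⟩ := GW.W_mem a _ _ _ h
      exact hgood t i1 i2 i3 hp
    · intro s _ t _ h
      exact (List.cons.inj h).2
  have c2 : ((GW.W a (k - 2) a).filter fun t => ¬ P t).card ≤ G.ncard := by
    rw [← Set.ncard_coe_finset]
    refine Set.ncard_le_ncard_of_injOn (fun t => a :: GW.flipL a t) ?_ ?_ hfin
    · intro t ht
      obtain ⟨h, hp⟩ := Finset.mem_filter.1 (Finset.mem_coe.1 ht)
      obtain ⟨i1, i2, i3⟩ := GW.W_mem a _ _ _ h
      obtain ⟨j1, j2, _⟩ := GW.flipL_spec a t i2 i3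
      refine hgood _ (by rw [GW.flipL_length, i1]) j1 j2 ?_
      have := GW.flipL_sum f a hinv hpos.le t
      have hp' : ¬ 0 < f a + (t.map f).sum := hp
      linarith
    · intro s hs t ht h
      have hs' := (Finset.mem_filter.1 (Finset.mem_coe.1 hs)).1
      have ht' := (Finset.mem_filter.1 (Finset.mem_coe.1 ht)).1
      obtain ⟨_, i2, i3⟩ := GW.W_mem a _ _ _ hs'
      obtain ⟨_, j2, j3⟩ := GW.W_mem a _ _ _ ht'
      have h' : GW.flipL a s = GW.flipL a t := (List.cons.inj h).2
      rw [← (GW.flipL_spec a s i2 i3).2.2, h', (GW.flipL_spec a t j2 j3).2.2]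
  have c3 := Finset.card_filter_add_card_filter_not (s := GW.W a (k - 2) a) P
  have c4 := GW.W_card a (k - 2) a
  have c5 : (2 * m - 2) * (2 * m - 1) ^ (k - 2) ≤ 2 * G.ncard := by omega
  have c6 : 2 * (4 * m * (m - 1) ^ 2 * (2 * m - 1) ^ (k - 4)) ≤
      (2 * m - 2) * (2 * m - 1) ^ (k - 2) := by
    obtain ⟨n, rfl⟩ : ∃ n, m = n + 1 := ⟨m - 1, by omega⟩
    obtain ⟨l, rfl⟩ : ∃ l, k = l + 4 := ⟨k - 4, by omega⟩
    have e1 : 2 * (n + 1) - 2 = 2 * n := by omega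
    have e2 : 2 * (n + 1) - 1 = 2 * n + 1 := by omega
    have e3 : l + 4 - 2 = l + 2 := by omega
    rw [e1, e2, e3, Nat.add_sub_cancel, Nat.add_sub_cancel, pow_add]
    have : 2 * (4 * (n + 1) * n ^ 2) ≤ 2 * n * (2 * n + 1) ^ 2 := by nlinarith
    calc 2 * (4 * (n + 1) * n ^ 2 * (2 * n + 1) ^ l)
        = 2 * (4 * (n + 1) * n ^ 2) * (2 * n + 1) ^ l := by ring
      _ ≤ 2 * n * (2 * n + 1) ^ 2 * (2 * n + 1) ^ l := Nat.mul_le_mul_right _ this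
      _ = _ := by ring
  omega
end

section
/- Let m ≥ 2, let F_m be a free group with free basis A of size m, and let φ : F_m → ℤ be a surjective homomorphism. Let a ∈ A ∪ A^{-1} be a letter with φ(a) maximal among all letters of A ∪ A^{-1}. Then the number d_k of good words of length k satisfies lim_{k→∞} d_k^{1/k} = 2m - 1. -/
open Filter Topology

/-- Reduced continuations of length `n` after the letter `x`. -/
def redCont {m : ℕ} : ℕ → Fin m × Bool → Finset (List (Fin m × Bool))
  | 0, _ => {[]}
  | n + 1, x => (Finset.univ.erase (x.1, !x.2)).biUnion
      (fun y => (redCont n y).image (List.cons y))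

lemma mem_redCont {m : ℕ} (n : ℕ) (x : Fin m × Bool) (w : List (Fin m × Bool)) :
    w ∈ redCont n x ↔ w.length = n ∧ FreeGroup.IsReduced (x :: w) := by
  induction n generalizing x w with
  | zero =>
    simp only [redCont, Finset.mem_singleton, List.length_eq_zero_iff]
    constructor
    · rintro rfl
      exact ⟨rfl, by simp⟩
    · exact fun h => h.1
  | succ n ih =>
    simp only [redCont, Finset.mem_biUnion, Finset.mem_erase, Finset.mem_univ, and_true,
      Finset.mem_image, ih]
    constructor
    · rintro ⟨y, hy, v, ⟨hl, hv⟩, rfl⟩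
      refine ⟨by simp [hl], ?_⟩
      rw [FreeGroup.isReduced_cons_cons]
      refine ⟨fun h => ?_, hv⟩
      by_contra h2
      apply hy
      obtain ⟨x1, x2⟩ := x
      obtain ⟨y1, y2⟩ := y
      cases x2 <;> cases y2 <;> simp_all
    · rintro ⟨hl, hw⟩
      cases w with
      | nil => simp at hl
      | cons y v =>
        rw [FreeGroup.isReduced_cons_cons] at hw
        refine ⟨y, ?_, v, ⟨by simpa using hl, hw.2⟩, rfl⟩
        rintro rfl
        have := hw.1 rfl
        simp at this

lemma card_redCont {m : ℕ} (n : ℕ) (x : Fin m × Bool) :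
    (redCont n x).card = (2 * m - 1) ^ n := by
  induction n generalizing x with
  | zero => simp [redCont]
  | succ n ih =>
    rw [redCont, Finset.card_biUnion]
    · rw [Finset.sum_congr rfl (fun y _ => by
        rw [Finset.card_image_of_injective _ List.cons_injective, ih y])]
      rw [Finset.sum_const, Finset.card_erase_of_mem (Finset.mem_univ _)]
      simp [pow_succ, mul_comm]
    · intro y _ z _ hyz
      rw [Function.onFun, Finset.disjoint_left]
      intro w hw hw'
      simp only [Finset.mem_image] at hw hw'
      obtain ⟨v, _, rfl⟩ := hw
      obtain ⟨v', _, h⟩ := hw'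
      exact hyz (List.cons.inj h).1.symm

/-- The padded word. -/
def padWord {m : ℕ} (a b : Fin m × Bool) (u : List (Fin m × Bool)) : List (Fin m × Bool) :=
  [a, if u.head? = some (a.1, !a.2) then b else a] ++ u ++
    [if u.getLast? = some (a.1, !a.2) then b else a]

lemma padWord_inj {m : ℕ} (a b : Fin m × Bool) : Function.Injective (padWord a b) := by
  intro u v h
  unfold padWord at h
  have h2 := (List.append_inj_left' h rfl)
  exact (List.append_inj_right h2 rfl)

lemma ne_inv {m : ℕ} {x a : Fin m × Bool} (h : x ≠ (a.1, !a.2)) : x.1 = a.1 → x.2 = a.2 := by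
  obtain ⟨x1, x2⟩ := x
  obtain ⟨a1, a2⟩ := a
  rintro rfl
  cases x2 <;> cases a2 <;> simp_all

lemma padWord_reduced {m : ℕ} (a b : Fin m × Bool) (hab : b.1 ≠ a.1) (u : List (Fin m × Bool))
    (hu : FreeGroup.IsReduced u) : FreeGroup.IsReduced (padWord a b u) := by
  unfold padWord FreeGroup.IsReduced
  rw [List.isChain_append, List.isChain_append]
  refine ⟨⟨?_, hu, ?_⟩, by simp, ?_⟩
  · split_ifs
    · simp [hab.symm]
    · simp
  · intro x hx y hy
    simp only [List.getLast?_cons_cons, List.getLast?_singleton, Option.mem_def,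
      Option.some.injEq] at hx hy
    subst hx
    rw [hy]
    split_ifs with h
    · simp only [Option.some.injEq] at h
      subst h
      exact fun h => absurd h hab
    · simp only [Option.some.injEq] at h
      exact fun e => (ne_inv h e.symm).symm
  · intro x hx y hy
    simp only [List.head?_cons, Option.mem_def, Option.some.injEq] at hy
    subst hy
    cases hu' : u.getLast? with
    | none =>
      have : u = [] := by simpa using hu'
      subst this
      simp at hx
      subst hx
      simp
    | some z =>
      rw [List.getLast?_append, hu', Option.some_or, Option.mem_def, Option.some.injEq] at hx
      subst hx
      split_ifs with h
      · simp only [Option.some.injEq] at h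
        subst h
        exact fun h => absurd h.symm hab
      · simp only [Option.some.injEq] at h
        exact ne_inv h

section aux
variable {m : ℕ} (φ : FreeGroup (Fin m) → ℤ)

lemma phi_one (hφ : ∀ x y, φ (x * y) = φ x + φ y) : φ 1 = 0 := by
  have := hφ 1 1
  simp at this
  exact this

lemma phi_inv (hφ : ∀ x y, φ (x * y) = φ x + φ y) (x) : φ x⁻¹ = - φ x := by
  have := hφ x x⁻¹
  rw [mul_inv_cancel, phi_one φ hφ] at this
  linarith

lemma phi_append (hφ : ∀ x y, φ (x * y) = φ x + φ y) (u v : List (Fin m × Bool)) :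
    φ (FreeGroup.mk (u ++ v)) = φ (FreeGroup.mk u) + φ (FreeGroup.mk v) := by
  rw [← hφ, FreeGroup.mul_mk]

lemma phi_neg (hφ : ∀ x y, φ (x * y) = φ x + φ y) (i : Fin m) (s : Bool) :
    φ (FreeGroup.mk [(i, !s)]) = - φ (FreeGroup.mk [(i, s)]) := by
  rw [← phi_inv φ hφ, FreeGroup.inv_mk]
  simp [FreeGroup.invRev]

lemma phi_a_pos (hφ : ∀ x y, φ (x * y) = φ x + φ y) (hsurj : Function.Surjective φ)
    (a : Fin m × Bool)
    (ha : ∀ l : Fin m × Bool, φ (FreeGroup.mk [l]) ≤ φ (FreeGroup.mk [a])) :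
    0 < φ (FreeGroup.mk [a]) := by
  by_contra hc
  have hz : ∀ l : Fin m × Bool, φ (FreeGroup.mk [l]) = 0 := by
    rintro ⟨i, s⟩
    have h1 := ha (i, s)
    have h2 := ha (i, !s)
    rw [phi_neg φ hφ] at h2
    linarith
  have hw : ∀ w : List (Fin m × Bool), φ (FreeGroup.mk w) = 0 := by
    intro w
    induction w with
    | nil => exact phi_one φ hφ
    | cons x w ih =>
      have := phi_append φ hφ [x] w
      rw [ih, hz] at this
      simpa using this
  obtain ⟨x, hx⟩ := hsurj 1
  have := hw x.toWord
  rw [FreeGroup.mk_toWord] at this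
  omega

lemma padWord_good (hφ : ∀ x y, φ (x * y) = φ x + φ y) (a b : Fin m × Bool)
    (hab : b.1 ≠ a.1) (hpa : 0 < φ (FreeGroup.mk [a])) (hpb : 0 ≤ φ (FreeGroup.mk [b]))
    (u : List (Fin m × Bool)) (hu : FreeGroup.IsReduced u) (hpu : 0 ≤ φ (FreeGroup.mk u)) :
    IsGoodWord φ a (padWord a b u) := by
  refine ⟨(padWord_reduced a b hab u hu).reduce_eq, by simp [padWord], ?_, ?_⟩
  · unfold padWord
    rw [List.getLast?_append]
    rw [List.getLast?_singleton, Option.some_or, ne_eq, Option.some.injEq]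
    by_cases hl : u.getLast? = some (a.1, !a.2)
    · rw [if_pos hl]
      intro h
      exact hab (by rw [h])
    · rw [if_neg hl]
      intro h
      simp [Prod.ext_iff] at h
  · unfold padWord
    have e : ∀ x y : Fin m × Bool, [x, y] = [x] ++ [y] := fun _ _ => rfl
    rw [e, phi_append φ hφ, phi_append φ hφ, phi_append φ hφ]
    split_ifs <;> linarith

lemma finite_good (a : Fin m × Bool) (k : ℕ) :
    {w : List (Fin m × Bool) | w.length = k ∧ IsGoodWord φ a w}.Finite :=
  (List.finite_length_eq _ k).subset fun _ h => h.1

lemma good_upper (a : Fin m × Bool) (n : ℕ) :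
    {w : List (Fin m × Bool) | w.length = n + 1 ∧ IsGoodWord φ a w}.ncard ≤ (2 * m - 1) ^ n := by
  rw [← card_redCont n a, ← Finset.card_image_of_injective _ (List.cons_injective (a := a)),
    ← Set.ncard_coe_finset]
  apply Set.ncard_le_ncard _ (Finset.finite_toSet _)
  rintro w ⟨hl, hr, hh, -⟩
  cases w with
  | nil => simp at hl
  | cons x v =>
    simp only [List.head?_cons, Option.some.injEq] at hh
    subst hh
    simp only [Finset.coe_image, Set.mem_image, Finset.mem_coe]
    exact ⟨v, (mem_redCont _ _ _).2 ⟨by simpa using hl, FreeGroup.IsReduced.of_reduce_eq hr⟩, rfl⟩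

lemma good_lower (hm : 2 ≤ m) (hφ : ∀ x y, φ (x * y) = φ x + φ y)
    (hsurj : Function.Surjective φ) (a : Fin m × Bool)
    (ha : ∀ l : Fin m × Bool, φ (FreeGroup.mk [l]) ≤ φ (FreeGroup.mk [a])) (n : ℕ) :
    (2 * m - 1) ^ n ≤
      2 * {w : List (Fin m × Bool) | w.length = n + 3 ∧ IsGoodWord φ a w}.ncard := by
  have hpa := phi_a_pos φ hφ hsurj a ha
  obtain ⟨b, hab, hpb⟩ : ∃ b : Fin m × Bool, b.1 ≠ a.1 ∧ 0 ≤ φ (FreeGroup.mk [b]) := by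
    have : Nontrivial (Fin m) := Fin.nontrivial_iff_two_le.2 hm
    obtain ⟨i, hi⟩ := exists_ne a.1
    by_cases h : 0 ≤ φ (FreeGroup.mk [(i, true)])
    · exact ⟨(i, true), hi, h⟩
    · refine ⟨(i, !true), hi, ?_⟩
      rw [phi_neg φ hφ]
      omega
  rw [← card_redCont n a,
    ← Finset.card_filter_add_card_filter_not (fun u => 0 ≤ φ (FreeGroup.mk u)), two_mul]
  have hred : ∀ u ∈ redCont n a, u.length = n ∧ FreeGroup.IsReduced u := by
    intro u hu
    rw [mem_redCont] at hu
    exact ⟨hu.1, List.IsChain.tail hu.2⟩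
  apply add_le_add
  · rw [← Set.ncard_coe_finset]
    apply Set.ncard_le_ncard_of_injOn (padWord a b) _ (padWord_inj a b).injOn (finite_good φ a _)
    intro u hu
    simp only [Finset.coe_filter, Set.mem_ofPred_eq] at hu
    obtain ⟨h1, h2⟩ := hred u hu.1
    exact ⟨by simp [padWord, h1]; try omega, padWord_good φ hφ a b hab hpa hpb u h2 hu.2⟩
  · rw [← Set.ncard_coe_finset]
    apply Set.ncard_le_ncard_of_injOn (fun u => padWord a b (FreeGroup.invRev u)) _
      ((padWord_inj a b).comp FreeGroup.invRev_injective).injOn (finite_good φ a _)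
    intro u hu
    simp only [Finset.coe_filter, Set.mem_ofPred_eq] at hu
    obtain ⟨h1, h2⟩ := hred u hu.1
    refine ⟨by simp [padWord, h1]; try omega, padWord_good φ hφ a b hab hpa hpb _ ?_ ?_⟩
    · apply FreeGroup.IsReduced.of_reduce_eq
      rw [FreeGroup.reduce_invRev, h2.reduce_eq]
    · rw [← FreeGroup.inv_mk, phi_inv φ hφ]
      omega

end aux

lemma root_tendsto (c q : ℝ) (hc : 0 < c) (hq : 0 < q) :
    Tendsto (fun k : ℕ => (c * q ^ k) ^ (1 / (k : ℝ))) atTop (𝓝 q) := by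
  have h1 : Tendsto (fun k : ℕ => c ^ (1 / (k : ℝ)) * q) atTop (𝓝 (c ^ (0 : ℝ) * q)) := by
    apply Tendsto.mul_const
    exact (Real.continuousAt_const_rpow hc.ne').tendsto.comp tendsto_one_div_atTop_nhds_zero_nat
  rw [Real.rpow_zero, one_mul] at h1
  refine h1.congr' ?_
  filter_upwards [eventually_ge_atTop 1] with k hk
  rw [Real.mul_rpow hc.le (by positivity), one_div, Real.pow_rpow_inv_natCast hq.le (by omega)]

/-- Lemma 1, second part. With `d_k` the number of good words of
length `k`, one has `lim_{k→∞} d_k^{1/k} = 2m - 1`. -/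
theorem good_words_count_root_tendsto (m : ℕ) (hm : 2 ≤ m)
    (φ : FreeGroup (Fin m) → ℤ)
    (hφ : ∀ x y : FreeGroup (Fin m), φ (x * y) = φ x + φ y)
    (hsurj : Function.Surjective φ)
    (a : Fin m × Bool)
    (ha : ∀ ℓ : Fin m × Bool, φ (FreeGroup.mk [ℓ]) ≤ φ (FreeGroup.mk [a])) :
    Filter.Tendsto
      (fun k : ℕ =>
        ((Set.ncard {w : List (Fin m × Bool) | w.length = k ∧ IsGoodWord φ a w} : ℝ))
          ^ (1 / (k : ℝ)))
      Filter.atTop (nhds (2 * (m : ℝ) - 1)) := by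
  have hq : (0 : ℝ) < 2 * (m : ℝ) - 1 := by
    have : (2 : ℝ) ≤ m := by exact_mod_cast hm
    linarith
  have hcast : ((2 * m - 1 : ℕ) : ℝ) = 2 * (m : ℝ) - 1 := by
    rw [Nat.cast_sub (by omega)]
    push_cast
    ring
  refine tendsto_of_tendsto_of_tendsto_of_le_of_le'
    (root_tendsto (1 / (2 * (2 * (m : ℝ) - 1) ^ 3)) _ (by positivity) hq)
    (root_tendsto (1 / (2 * (m : ℝ) - 1)) _ (by positivity) hq) ?_ ?_
  · filter_upwards [eventually_ge_atTop 3] with k hk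
    obtain ⟨n, rfl⟩ := Nat.exists_eq_add_of_le' hk
    apply Real.rpow_le_rpow (by positivity) _ (by positivity)
    have h := good_lower φ hm hφ hsurj a ha n
    have h' : ((2 * m - 1 : ℕ) : ℝ) ^ n ≤ 2 *
      ({w : List (Fin m × Bool) | w.length = n + 3 ∧ IsGoodWord φ a w}.ncard : ℝ) := by
      exact_mod_cast h
    rw [hcast] at h'
    have e : 1 / (2 * (2 * (m : ℝ) - 1) ^ 3) * (2 * (m : ℝ) - 1) ^ (n + 3)
        = (2 * (m : ℝ) - 1) ^ n / 2 := by
      rw [pow_add]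
      field_simp
    rw [e]
    linarith
  · filter_upwards [eventually_ge_atTop 1] with k hk
    obtain ⟨n, rfl⟩ := Nat.exists_eq_add_of_le' hk
    apply Real.rpow_le_rpow (by positivity) _ (by positivity)
    have h := good_upper φ a n
    have h' : ({w : List (Fin m × Bool) | w.length = n + 1 ∧ IsGoodWord φ a w}.ncard : ℝ)
        ≤ ((2 * m - 1 : ℕ) : ℝ) ^ n := by
      exact_mod_cast h
    rw [hcast] at h'
    have e : 1 / (2 * (m : ℝ) - 1) * (2 * (m : ℝ) - 1) ^ (n + 1) = (2 * (m : ℝ) - 1) ^ n := by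
      rw [pow_succ]
      field_simp
    rw [e]
    exact h'
end

section
/- Let m ≥ 2, let F_m be a free group with free basis A of size m, and let φ : F_m → ℤ be a surjective homomorphism. Let a ∈ A ∪ A^{-1} be a letter with φ(a) maximal among all letters of A ∪ A^{-1}. For k ≥ 2, let Ω be the set of all freely reduced words of length k-1 over A^{±1} with φ(v) ≥ 0, and let Ω₁ ⊆ Ω consist of those words of Ω whose initial letter is different from a^{-1}. Then |Ω₁| ≥ ((2m-2)/(2m-1))·|Ω|. -/
open Filter Topology

/-- Inverse letter. -/
def linv {m : ℕ} (x : Fin m × Bool) : Fin m × Bool := (x.1, !x.2)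

/-- Flip the maximal alternating prefix `p⁻¹ q⁻¹ p⁻¹ ...` into `q p q ...`. -/
def flipPre {m : ℕ} : Fin m × Bool → Fin m × Bool → List (Fin m × Bool) → List (Fin m × Bool)
  | _, _, [] => []
  | p, q, x :: L => if x = linv p then q :: flipPre q p L else x :: L

theorem linv_linv {m : ℕ} (x : Fin m × Bool) : linv (linv x) = x := by
  simp [linv]

theorem isRed_iff {m : ℕ} (w : List (Fin m × Bool)) :
    IsReducedWord w ↔ List.IsChain (fun x y => y ≠ linv x) w := by
  have h : IsReducedWord w ↔ FreeGroup.IsReduced w := by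
    rw [FreeGroup.isReduced_iff_reduce_eq]; rfl
  rw [h, FreeGroup.IsReduced]
  have : (fun a b : Fin m × Bool => a.1 = b.1 → a.2 = b.2) = (fun x y => y ≠ linv x) := by
    funext x y
    obtain ⟨x1, x2⟩ := x
    obtain ⟨y1, y2⟩ := y
    cases x2 <;> cases y2 <;> simp [linv, eq_comm]
  rw [this]

theorem flip_length {m : ℕ} (L : List (Fin m × Bool)) : ∀ p q, (flipPre p q L).length = L.length := by
  induction L with
  | nil => intro p q; rfl
  | cons x L ih => intro p q; simp only [flipPre]; split_ifs <;> simp [ih]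

theorem flip_red {m : ℕ} (L : List (Fin m × Bool)) : ∀ p q, q ≠ p → q ≠ linv p →
    List.IsChain (fun x y => y ≠ linv x) (linv p :: L) →
    List.IsChain (fun x y => y ≠ linv x) (q :: flipPre q p L) := by
  induction L with
  | nil => intro p q _ _ _; simp [flipPre]
  | cons y L ih =>
    intro p q h1 h2 h
    rw [List.isChain_cons_cons] at h
    simp only [flipPre]
    split_ifs with hy
    · subst hy
      rw [List.isChain_cons_cons]
      have h3 : p ≠ linv q := fun e => h2 (by rw [e, linv_linv])
      exact ⟨h3, ih q p h1.symm h3 h.2⟩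
    · rw [List.isChain_cons_cons]
      exact ⟨hy, h.2⟩

theorem flip_inv {m : ℕ} (L : List (Fin m × Bool)) : ∀ p q,
    List.IsChain (fun x y => y ≠ linv x) L → L.head? ≠ some q →
    flipPre (linv q) (linv p) (flipPre p q L) = L := by
  induction L with
  | nil => intro p q _ _; simp [flipPre]
  | cons y L ih =>
    intro p q h hq
    by_cases hy : y = linv p
    · subst hy
      simp only [flipPre, linv_linv, if_true]
      rw [ih q p h.tail]
      intro hc
      cases L with
      | nil => simp at hc
      | cons z L =>
        rw [List.isChain_cons_cons] at h
        simp only [List.head?_cons, Option.some.injEq] at hc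
        exact h.1 (by rw [hc, linv_linv])
    · have : y ≠ q := by simpa using hq
      simp [flipPre, hy, linv_linv, this]

theorem flip_phi {m : ℕ} (φ : FreeGroup (Fin m) → ℤ)
    (hφ : ∀ x y : FreeGroup (Fin m), φ (x * y) = φ x + φ y)
    (L : List (Fin m × Bool)) : ∀ p q,
    φ (FreeGroup.mk [linv p]) ≤ φ (FreeGroup.mk [q]) →
    φ (FreeGroup.mk [linv q]) ≤ φ (FreeGroup.mk [p]) →
    φ (FreeGroup.mk L) ≤ φ (FreeGroup.mk (flipPre p q L)) := by
  have hc : ∀ (x : Fin m × Bool) L, φ (FreeGroup.mk (x :: L)) =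
      φ (FreeGroup.mk [x]) + φ (FreeGroup.mk L) := by
    intro x L; rw [← hφ, FreeGroup.mul_mk]; rfl
  induction L with
  | nil => intro p q _ _; simp [flipPre]
  | cons y L ih =>
    intro p q h1 h2
    simp only [flipPre]
    split_ifs with hy
    · subst hy
      rw [hc, hc q]
      exact add_le_add h1 (ih q p h2 h1)
    · exact le_rfl

theorem phi_linv {m : ℕ} (φ : FreeGroup (Fin m) → ℤ)
    (hφ : ∀ x y : FreeGroup (Fin m), φ (x * y) = φ x + φ y) (x : Fin m × Bool) :
    φ (FreeGroup.mk [linv x]) = - φ (FreeGroup.mk [x]) := by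
  have h1 : φ 1 = 0 := by have := hφ 1 1; simp at this; exact this
  have h2 : (FreeGroup.mk [linv x]) = (FreeGroup.mk [x])⁻¹ := by
    simp [FreeGroup.inv_mk, FreeGroup.invRev, linv]
  have h3 := hφ (FreeGroup.mk [x])⁻¹ (FreeGroup.mk [x])
  rw [inv_mul_cancel, h1] at h3
  rw [h2]; linarith

/-- Let `Ω` be the set of freely reduced words of length `k-1` with
nonnegative `φ`-value and let `Ω₁ ⊆ Ω` consist of the words whose initial letter is
different from `a⁻¹`, where `a` is a letter with maximal `φ`-value. Then
`|Ω₁| ≥ ((2m-2)/(2m-1))·|Ω|`. -/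
theorem omega_one_lower_bound (m k : ℕ) (hm : 2 ≤ m) (hk : 2 ≤ k)
    (φ : FreeGroup (Fin m) → ℤ)
    (hφ : ∀ x y : FreeGroup (Fin m), φ (x * y) = φ x + φ y)
    (hsurj : Function.Surjective φ)
    (a : Fin m × Bool)
    (ha : ∀ ℓ : Fin m × Bool, φ (FreeGroup.mk [ℓ]) ≤ φ (FreeGroup.mk [a])) :
    ((2 * (m : ℝ) - 2) / (2 * (m : ℝ) - 1)) *
        (Set.ncard {w : List (Fin m × Bool) |
          w.length = k - 1 ∧ IsReducedWord w ∧ 0 ≤ φ (FreeGroup.mk w)} : ℝ) ≤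
      (Set.ncard {w : List (Fin m × Bool) |
          (w.length = k - 1 ∧ IsReducedWord w ∧ 0 ≤ φ (FreeGroup.mk w)) ∧
          w.head? ≠ some (a.1, !a.2)} : ℝ) := by
  set Ω : Set (List (Fin m × Bool)) := {w | w.length = k - 1 ∧ IsReducedWord w ∧ 0 ≤ φ (FreeGroup.mk w)} with hΩ
  set Ω₁ : Set (List (Fin m × Bool)) := {w | (w.length = k - 1 ∧ IsReducedWord w ∧ 0 ≤ φ (FreeGroup.mk w)) ∧
          w.head? ≠ some (a.1, !a.2)} with hΩ₁
  have hfin : Ω.Finite := (List.finite_length_eq (Fin m × Bool) (k - 1)).subset (fun w hw => hw.1)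
  have hsub : Ω₁ ⊆ Ω := fun w hw => hw.1
  have hfin1 : Ω₁.Finite := hfin.subset hsub
  let B : Finset (Fin m × Bool) := (Finset.univ.erase a).erase (linv a)
  have hne : linv a ≠ a := by
    obtain ⟨i, b⟩ := a
    cases b <;> simp [linv]
  have hB : B.card = 2 * m - 2 := by
    rw [Finset.card_erase_of_mem (by simp [hne]), Finset.card_erase_of_mem (by simp)]
    simp
    omega
  have hstruct : ∀ w ∈ Ω \ Ω₁, ∃ L, w = linv a :: L := by
    rintro w ⟨hw, hw1⟩
    have : w.head? = some (linv a) := by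
      by_contra hc
      exact hw1 ⟨hw, hc⟩
    cases w with
    | nil => simp at this
    | cons x L => simp at this; exact ⟨L, by rw [this]⟩
  have key : ((B : Set (Fin m × Bool)) ×ˢ (Ω \ Ω₁)).ncard ≤ Ω₁.ncard := by
    apply Set.ncard_le_ncard_of_injOn (fun x => flipPre a x.1 x.2) _ _ hfin1
    · rintro ⟨b, w⟩ ⟨hb, hw⟩
      obtain ⟨L, rfl⟩ := hstruct w hw
      simp only [B, Finset.coe_erase, Finset.coe_univ, Set.mem_sdiff, Set.mem_univ, true_and,
        Set.mem_singleton_iff] at hb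
      obtain ⟨⟨h1, h2, h3⟩, -⟩ := hw
      refine ⟨⟨?_, ?_, ?_⟩, ?_⟩
      · simpa [flip_length] using h1
      · rw [isRed_iff] at h2 ⊢
        have := flip_red L a b hb.1 hb.2 h2
        simpa [flipPre] using this
      · refine h3.trans (flip_phi φ hφ _ a b ?_ (ha _))
        have h4 := ha (linv b)
        rw [phi_linv φ hφ] at h4 ⊢
        linarith
      · simpa [flipPre, linv] using hb.2
    · rintro ⟨b, w⟩ ⟨hb, hw⟩ ⟨b', w'⟩ ⟨hb', hw'⟩ h
      obtain ⟨L, rfl⟩ := hstruct w hw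
      obtain ⟨L', rfl⟩ := hstruct w' hw'
      simp only [B, Finset.coe_erase, Finset.coe_univ, Set.mem_sdiff, Set.mem_univ, true_and,
        Set.mem_singleton_iff] at hb hb'
      have hbb : b = b' := by
        simp [flipPre] at h
        exact h.1
      subst hbb
      have e1 := flip_inv (linv a :: L) a b ((isRed_iff _).1 hw.1.2.1) (by simpa using fun e => hb.2 e.symm)
      have e2 := flip_inv (linv a :: L') a b ((isRed_iff _).1 hw'.1.2.1) (by simpa using fun e => hb.2 e.symm)
      simp only at h
      rw [h, e2] at e1
      rw [e1]
  rw [Set.ncard_prod, Set.ncard_coe_finset, hB] at key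
  have hd := Set.ncard_sdiff_add_ncard_of_subset hsub hfin
  have hm' : (2:ℝ) ≤ m := by exact_mod_cast hm
  have key' : (2 * (m:ℝ) - 2) * ((Ω \ Ω₁).ncard : ℝ) ≤ Ω₁.ncard := by
    have : ((2 * m - 2 : ℕ) : ℝ) = 2 * (m:ℝ) - 2 := by
      rw [Nat.cast_sub (by omega)]; push_cast; ring
    rw [← this]; exact_mod_cast key
  rw [← hd, div_mul_eq_mul_div, div_le_iff₀ (by linarith)]
  push_cast
  linarith
end

section
/- Let m ≥ 2, let F_m be a free group with free basis A of size m, let φ : F_m → ℤ be a surjective homomorphism, let a ∈ A ∪ A^{-1} be a letter with φ(a) maximal among all letters of A ∪ A^{-1}, and set C = φ(a). Let R be a normal subgroup of F_m contained in the kernel of φ, and suppose k ≥ 2 satisfies ρ(R) > Ck(2k-3) + 2k - 2, where ρ(R) is the length of the shortest nontrivial element of R. Then any path in the Cayley graph of F_m/R (with respect to the images of A) labelled by a word of the form g₁g₂⋯g_t, where t ≥ 1 and each g_s is a good word of length k, is self-avoiding. -/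
open Filter Topology

/-- The path in the Cayley graph of `F_m/R` (w.r.t. the images of the free basis)
starting at the identity and labelled by the word `w` is *self-avoiding*: the vertices
it visits, i.e. the images in `F_m/R` of the prefixes of `w`, are pairwise distinct. -/
def SelfAvoiding {m : ℕ} (R : Subgroup (FreeGroup (Fin m)))
    (w : List (Fin m × Bool)) : Prop :=
  ∀ i j : ℕ, i ≤ w.length → j ≤ w.length →
    (QuotientGroup.mk (FreeGroup.mk (w.take i)) : FreeGroup (Fin m) ⧸ R) =
      QuotientGroup.mk (FreeGroup.mk (w.take j)) → i = j

theorem arith_core (k t : ℕ) (hk : 2 ≤ k) (C : ℤ) (hC : 0 ≤ C) (f : ℕ → ℤ)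
    (hstep : ∀ i, i < k * t → f i - C ≤ f (i + 1))
    (hone : ∀ s, s < t → f (k * s + 1) = f (k * s) + C)
    (hblock : ∀ s, s < t → f (k * s) + 1 ≤ f (k * (s + 1)))
    (i j : ℕ) (hij : i < j) (hj : j ≤ k * t) (hf : f i = f j) :
    (j : ℤ) - i ≤ C * k * (2 * (k : ℤ) - 3) + 2 * k - 2 := by
  have hsteps : ∀ d x, x + d ≤ k * t → f x - C * d ≤ f (x + d) := by
    intro d
    induction d with
    | zero => intro x _; simp
    | succ d ih =>
      intro x hx
      have h1 := ih x (by omega)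
      have h2 := hstep (x + d) (by omega)
      push_cast
      rw [← add_assoc]
      linarith
  have hblocks : ∀ d x, x + d ≤ t → f (k * x) + d ≤ f (k * (x + d)) := by
    intro d
    induction d with
    | zero => intro x _; simp
    | succ d ih =>
      intro x hx
      have h1 := ih x (by omega)
      have h2 := hblock (x + d) (by omega)
      push_cast
      rw [← add_assoc, ← add_assoc x d 1]
      linarith
  have hkz : (2 : ℤ) ≤ k := by exact_mod_cast hk
  have hnn : 0 ≤ C * k * (2 * (k : ℤ) - 3) :=
    mul_nonneg (mul_nonneg hC (by omega)) (by omega)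
  by_cases hsmall : j < i + k
  · have : (j : ℤ) < i + k := by exact_mod_cast hsmall
    linarith
  obtain ⟨p, r, hp, hr⟩ : ∃ p r, k * p = i + r ∧ r < k := by
    have h1 := Nat.div_add_mod i k
    have h2 := Nat.mod_lt i (show 0 < k by omega)
    by_cases h0 : i % k = 0
    · exact ⟨i / k, 0, by omega, by omega⟩
    · exact ⟨i / k + 1, k - i % k, by rw [mul_add]; omega, by omega⟩
  obtain ⟨q, l, hq, hl⟩ : ∃ q l, j = k * q + l ∧ l < k :=
    ⟨j / k, j % k, (Nat.div_add_mod j k).symm, Nat.mod_lt j (by omega)⟩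
  have hpq : p ≤ q := by
    by_contra h
    have : k * (q + 1) ≤ k * p := Nat.mul_le_mul_left k (by omega)
    rw [mul_add] at this
    omega
  have hqt : q ≤ t := by
    have : k * q ≤ k * t := by omega
    exact Nat.le_of_mul_le_mul_left this (by omega)
  obtain ⟨n, rfl⟩ := Nat.exists_eq_add_of_le hpq
  have hB := hblocks n p hqt
  have hR := hsteps r i (by
    have : k * p ≤ k * (p + n) := Nat.mul_le_mul_left k hpq
    omega)
  rw [← hp] at hR
  have hrz : (r : ℤ) ≤ k - 1 := by omega
  have hlz : (l : ℤ) ≤ k - 1 := by omega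
  have hCr : C * r ≤ C * (k - 1) := mul_le_mul_of_nonneg_left hrz hC
  have hL : f (k * (p + n)) - C * (k - 2) ≤ f j := by
    rcases Nat.eq_zero_or_pos l with h0 | h0
    · subst h0
      rw [hq]
      have : 0 ≤ C * ((k : ℤ) - 2) := mul_nonneg hC (by omega)
      simpa using this
    · obtain ⟨l', rfl⟩ : ∃ l', l = l' + 1 := ⟨l - 1, by omega⟩
      have hlt : p + n < t := by
        have : k * (p + n) < k * t := by omega
        exact Nat.lt_of_mul_lt_mul_left this
      have h1 := hone _ hlt
      have h2 := hsteps l' (k * (p + n) + 1) (by omega)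
      have h3 : k * (p + n) + 1 + l' = j := by omega
      rw [h3] at h2
      have h4 : C * l' ≤ C * (k - 2) := mul_le_mul_of_nonneg_left (by push_cast at hlz; linarith) hC
      linarith
  have hn : (n : ℤ) ≤ C * (2 * k - 3) := by linarith
  have hkn : (k : ℤ) * n ≤ k * (C * (2 * k - 3)) := mul_le_mul_of_nonneg_left hn (by omega)
  have hpz : (k : ℤ) * p = i + r := by exact_mod_cast hp
  have hqz : (j : ℤ) = k * (p + n) + l := by exact_mod_cast hq
  nlinarith

theorem length_flatten_const {α : Type*} (k : ℕ) (L : List (List α))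
    (h : ∀ g ∈ L, g.length = k) : L.flatten.length = k * L.length := by
  induction L with
  | nil => simp
  | cons g L ih =>
    have h1 := h g (by simp)
    have h2 := ih (fun x hx => h x (by simp [hx]))
    simp only [List.flatten_cons, List.length_append, List.length_cons, h1, h2]
    ring

theorem take_flatten_const {α : Type*} (k : ℕ) (L : List (List α))
    (h : ∀ g ∈ L, g.length = k) (s : ℕ) (hs : s < L.length) (l : ℕ) (hl : l ≤ k) :
    L.flatten.take (k * s + l) = L.flatten.take (k * s) ++ (L[s]).take l := by
  induction L generalizing s with
  | nil => simp at hs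
  | cons g L ih =>
    have h1 := h g (by simp)
    cases s with
    | zero =>
      simp only [List.flatten_cons, Nat.mul_zero, Nat.zero_add, List.take_zero, List.nil_append,
        List.getElem_cons_zero]
      exact List.take_append_of_le_length (by omega)
    | succ s =>
      have h2 := ih (fun x hx => h x (by simp [hx])) s (by simpa using hs)
      have e1 : k * (s + 1) + l = g.length + (k * s + l) := by rw [h1]; ring
      have e2 : k * (s + 1) = g.length + k * s := by rw [h1]; ring
      simp only [List.flatten_cons, List.getElem_cons_succ]
      rw [e1, e2, List.take_length_add_append, List.take_length_add_append, h2, List.append_assoc]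

/-- Lemma 2. Let `R ⊴ F_m` be contained in the kernel of the surjective
homomorphism `φ : F_m → ℤ`, let `a` be a letter of maximal `φ`-value, `C = φ(a)`, and let
`k ≥ 2` be such that every nontrivial element of `R` has length `> Ck(2k-3) + 2k - 2`
(i.e. `ρ(R) > Ck(2k-3) + 2k - 2`). Then any path in the Cayley graph of `F_m/R` labelled
by a word `g₁g₂⋯g_t` (`t ≥ 1`, each `g_s` a good word of length `k`) is self-avoiding. -/
theorem concatenation_of_good_words_self_avoiding (m k : ℕ) (hm : 2 ≤ m) (hk : 2 ≤ k)
    (φ : FreeGroup (Fin m) → ℤ)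
    (hφ : ∀ x y : FreeGroup (Fin m), φ (x * y) = φ x + φ y)
    (hsurj : Function.Surjective φ)
    (a : Fin m × Bool)
    (ha : ∀ ℓ : Fin m × Bool, φ (FreeGroup.mk [ℓ]) ≤ φ (FreeGroup.mk [a]))
    (R : Subgroup (FreeGroup (Fin m))) [R.Normal]
    (hker : ∀ g ∈ R, φ g = 0)
    (hρ : ∀ g ∈ R, g ≠ 1 →
      φ (FreeGroup.mk [a]) * k * (2 * (k : ℤ) - 3) + 2 * k - 2 < (FreeGroup.norm g : ℤ))
    (gs : List (List (Fin m × Bool))) (hne : gs ≠ [])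
    (hgood : ∀ g ∈ gs, g.length = k ∧ IsGoodWord φ a g) :
    SelfAvoiding R gs.flatten := by
  have hred : FreeGroup.IsReduced gs.flatten := by
    unfold FreeGroup.IsReduced
    rw [List.isChain_flatten]
    · refine ⟨fun g hg => ?_, ?_⟩
      · have h := (hgood g hg).2.1
        exact FreeGroup.isReduced_iff_reduce_eq.2 h
      · refine List.Pairwise.isChain (List.pairwise_of_forall_mem_list ?_)
        intro g hg g' hg' x hx y hy hxy
        have h1 := (hgood g hg).2.2.2.1
        have h2 := (hgood g' hg').2.2.1
        rw [h2] at hy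
        rw [hx] at h1
        simp only [Option.mem_def, Option.some.injEq] at hy
        subst hy
        by_contra hne2
        apply h1
        congr 1
        ext1
        · exact hxy
        · revert hne2
          cases x.2 <;> cases a.2 <;> simp
    · intro h
      have := (hgood [] h).1
      simp at this
      omega
  have hmk : ∀ u v : List (Fin m × Bool),
      φ (FreeGroup.mk (u ++ v)) = φ (FreeGroup.mk u) + φ (FreeGroup.mk v) := by
    intro u v
    rw [← FreeGroup.mul_mk, hφ]
  have hφ1 : φ 1 = 0 := by
    have := hφ 1 1
    simp at this
    exact this
  have hinv : ∀ ℓ : Fin m × Bool, - φ (FreeGroup.mk [a]) ≤ φ (FreeGroup.mk [ℓ]) := by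
    intro ℓ
    have h1 := ha (ℓ.1, !ℓ.2)
    have h2 := hφ (FreeGroup.mk [ℓ]) (FreeGroup.mk [ℓ])⁻¹
    rw [mul_inv_cancel, hφ1, FreeGroup.inv_mk] at h2
    simp only [FreeGroup.invRev, List.map_cons, List.map_nil, List.reverse_singleton] at h2
    linarith
  have hC : 0 ≤ φ (FreeGroup.mk [a]) := by
    have := hinv a
    linarith
  have hlen : ∀ g ∈ gs, g.length = k := fun g hg => (hgood g hg).1
  have hW := length_flatten_const k gs hlen
  have key : ∀ i j : ℕ, i < j → j ≤ gs.flatten.length →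
      (QuotientGroup.mk (FreeGroup.mk (gs.flatten.take i)) : FreeGroup (Fin m) ⧸ R) ≠
        QuotientGroup.mk (FreeGroup.mk (gs.flatten.take j)) := by
    intro i j hij hj heq
    have hmem := QuotientGroup.eq.1 heq
    have hsplit : gs.flatten.take j = gs.flatten.take i ++ (gs.flatten.drop i).take (j - i) := by
      rw [← List.take_add]
      congr 1
      omega
    rw [hsplit, ← FreeGroup.mul_mk, inv_mul_cancel_left] at hmem
    have hvred : FreeGroup.IsReduced ((gs.flatten.drop i).take (j - i)) :=
      List.IsChain.take (List.IsChain.drop hred i) _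
    have hnorm : FreeGroup.norm (FreeGroup.mk ((gs.flatten.drop i).take (j - i))) = j - i := by
      unfold FreeGroup.norm
      rw [FreeGroup.toWord_mk, FreeGroup.isReduced_iff_reduce_eq.1 hvred]
      simp only [List.length_take, List.length_drop]
      omega
    have hne1 : FreeGroup.mk ((gs.flatten.drop i).take (j - i)) ≠ 1 := by
      intro h
      rw [h, FreeGroup.norm_one] at hnorm
      omega
    have hb := hρ _ hmem hne1
    rw [hnorm] at hb
    have hz := hker _ hmem
    have hc := arith_core k gs.length hk (φ (FreeGroup.mk [a])) hC
      (fun i => φ (FreeGroup.mk (gs.flatten.take i)))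
      (by
        intro x hx
        have hx' : x < gs.flatten.length := by omega
        rw [← List.take_concat_get' _ _ hx', hmk]
        have := hinv (gs.flatten[x])
        linarith)
      (by
        intro s hs
        rw [take_flatten_const k gs hlen s hs 1 (by omega), hmk]
        have h2 := (hgood _ (List.getElem_mem hs)).2.2.1
        have h3 : (gs[s]).take 1 = [a] := by
          rw [List.take_one, h2]
          rfl
        rw [h3])
      (by
        intro s hs
        rw [mul_add, mul_one, take_flatten_const k gs hlen s hs k le_rfl, hmk]
        have h1 := hgood _ (List.getElem_mem hs)
        have h2 := h1.2.2.2.2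
        rw [List.take_of_length_le h1.1.le]
        linarith)
      i j hij (by omega)
      (by
        rw [hsplit, hmk, hz, add_zero])
    rw [Nat.cast_sub hij.le] at hb
    linarith
  intro i j hi hj h
  rcases lt_trichotomy i j with hlt | heq | hlt
  · exact absurd h (key i j hlt hj)
  · exact heq
  · exact absurd h.symm (key j i hlt hi)
end

section
/- Let m ≥ 2, let F_m be a free group with free basis A of size m, let φ : F_m → ℤ be a surjective homomorphism, let a ∈ A ∪ A^{-1} be a letter with φ(a) maximal among all letters of A ∪ A^{-1}, and set C = φ(a). Let R be a normal subgroup of F_m contained in the kernel of φ, and suppose k ≥ 2 satisfies ρ(R) > Ck(2k-3) + 2k - 2. Then the growth rate of F_m/R' with respect to the natural generators is at least d_k^{1/k}, where d_k is the number of good words of length k. -/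
open Filter Topology

/-- Evaluate a word over the alphabet `A^{±1}` (a letter is a pair `(i, b)`, where
`b = true` means the generator `σ i` and `b = false` means its inverse) in a group. -/
def wordEval {m : ℕ} {G : Type*} [Group G] (σ : Fin m → G)
    (w : List (Fin m × Bool)) : G :=
  (w.map fun ℓ => if ℓ.2 then σ ℓ.1 else (σ ℓ.1)⁻¹).prod

/-- The ball `B(n) = {g ∈ G : ℓ(g) ≤ n}` of radius `n` in a group with respect to the
generating map `σ`: the set of elements represented by words of length at most `n`. -/
def ball {m : ℕ} {G : Type*} [Group G] (σ : Fin m → G) (n : ℕ) : Set G :=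
  {g | ∃ w : List (Fin m × Bool), w.length ≤ n ∧ wordEval σ w = g}

/-- The growth rate `ω(G, A) = lim_{n→∞} |B(n)|^{1/n}`; the limit exists by
submultiplicativity of `|B(n)|`, hence equals the `limsup`. -/
noncomputable def growthRate {m : ℕ} {G : Type*} [Group G] (σ : Fin m → G) : ℝ :=
  Filter.limsup (fun n : ℕ => ((ball σ n).ncard : ℝ) ^ (1 / (n : ℝ))) Filter.atTop

namespace GW

/-- The group receiving the flow (Magnus) map. -/
abbrev Wr {m : ℕ} (R : Subgroup (FreeGroup (Fin m))) [R.Normal] : Type :=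
  ((FreeGroup (Fin m) ⧸ R) → (Fin m → Multiplicative ℤ)) ⋊[mulAutArrow] (FreeGroup (Fin m) ⧸ R)

open Classical in
/-- The flow (Magnus) map. -/
noncomputable def psi {m : ℕ} (R : Subgroup (FreeGroup (Fin m))) [R.Normal] :
    FreeGroup (Fin m) →* Wr R :=
  FreeGroup.lift fun i =>
    ⟨fun g j => if g = 1 ∧ j = i then Multiplicative.ofAdd 1 else 1, QuotientGroup.mk (FreeGroup.of i)⟩

theorem psi_right {m : ℕ} (R : Subgroup (FreeGroup (Fin m))) [R.Normal] (x : FreeGroup (Fin m)) :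
    (psi R x).right = (QuotientGroup.mk x : FreeGroup (Fin m) ⧸ R) := by
  have : (SemidirectProduct.rightHom).comp (psi R) = QuotientGroup.mk' R := by
    ext i
    simp [psi]
  exact DFunLike.congr_fun this x

theorem psi_comm {m : ℕ} (R : Subgroup (FreeGroup (Fin m))) [R.Normal] {x : FreeGroup (Fin m)}
    (hx : x ∈ ⁅R, R⁆) : psi R x = 1 := by
  have h : ⁅R, R⁆ ≤ (psi R).ker := by
    rw [Subgroup.commutator_le]
    intro g hg h hh
    rw [MonoidHom.mem_ker, map_commutatorElement, commutatorElement_eq_one_iff_mul_comm]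
    have h1 : (psi R g).right = 1 := by rw [psi_right]; exact (QuotientGroup.eq_one_iff g).2 hg
    have h2 : (psi R h).right = 1 := by rw [psi_right]; exact (QuotientGroup.eq_one_iff h).2 hh
    apply SemidirectProduct.ext
    · rw [SemidirectProduct.mul_left, SemidirectProduct.mul_left, h1, h2]
      simp [mul_comm]
    · rw [SemidirectProduct.mul_right, SemidirectProduct.mul_right, h1, h2]
  exact h hx

/-- The base point of the edge of a letter. -/
def eG {m : ℕ} (R : Subgroup (FreeGroup (Fin m))) [R.Normal] (x : Fin m × Bool) :
    FreeGroup (Fin m) ⧸ R :=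
  if x.2 then 1 else (QuotientGroup.mk (FreeGroup.mk [x]) : FreeGroup (Fin m) ⧸ R)

open Classical in
theorem psi_letter {m : ℕ} (R : Subgroup (FreeGroup (Fin m))) [R.Normal] (x : Fin m × Bool)
    (g : FreeGroup (Fin m) ⧸ R) (j : Fin m) :
    (psi R (FreeGroup.mk [x])).left g j = if g = eG R x ∧ j = x.1 then
      Multiplicative.ofAdd (if x.2 then (1 : ℤ) else -1) else 1 := by
  obtain ⟨i, b⟩ := x
  cases b
  · have : (FreeGroup.mk [(i, false)]) = (FreeGroup.of i)⁻¹ := rfl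
    rw [this, map_inv, SemidirectProduct.inv_left, psi_right]
    change ((psi R (FreeGroup.of i)).left
      (((QuotientGroup.mk (FreeGroup.of i) : FreeGroup (Fin m) ⧸ R)⁻¹)⁻¹ * g) j)⁻¹ = _
    simp only [eG, this, psi, FreeGroup.lift_apply_of, inv_inv, Bool.false_eq_true, if_false,
      QuotientGroup.mk_inv]
    have hiff : (QuotientGroup.mk (FreeGroup.of i) : FreeGroup (Fin m) ⧸ R) * g = 1 ↔
        g = (QuotientGroup.mk (FreeGroup.of i) : FreeGroup (Fin m) ⧸ R)⁻¹ :=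
      mul_eq_one_iff_eq_inv'
    by_cases h : g = (QuotientGroup.mk (FreeGroup.of i) : FreeGroup (Fin m) ⧸ R)⁻¹ ∧ j = i
    · rw [if_pos h, if_pos ⟨hiff.2 h.1, h.2⟩]
      rfl
    · rw [if_neg h, if_neg (fun h' => h ⟨hiff.1 h'.1, h'.2⟩), inv_one]
  · change (psi R (FreeGroup.of i)).left g j = _
    simp [psi, eG]

theorem psi_cons {m : ℕ} (R : Subgroup (FreeGroup (Fin m))) [R.Normal] (x : Fin m × Bool)
    (v : List (Fin m × Bool)) (g : FreeGroup (Fin m) ⧸ R) (j : Fin m) :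
    (psi R (FreeGroup.mk (x :: v))).left g j = (psi R (FreeGroup.mk [x])).left g j *
      (psi R (FreeGroup.mk v)).left
        ((QuotientGroup.mk (FreeGroup.mk [x]) : FreeGroup (Fin m) ⧸ R)⁻¹ * g) j := by
  have : FreeGroup.mk (x :: v) = FreeGroup.mk [x] * FreeGroup.mk v := by
    rw [FreeGroup.mul_mk]; rfl
  rw [this, map_mul, SemidirectProduct.mul_left, psi_right]
  rfl

theorem rest {m : ℕ} (R : Subgroup (FreeGroup (Fin m))) [R.Normal] (l : Fin m × Bool)
    (v : List (Fin m × Bool)) : ∀ (g : FreeGroup (Fin m)),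
    (∀ p, p <+: v → g * FreeGroup.mk p ∉ R) →
    (psi R (FreeGroup.mk v)).left ((QuotientGroup.mk g : FreeGroup (Fin m) ⧸ R)⁻¹ * eG R l) l.1 = 1 := by
  induction v with
  | nil =>
    intro g _
    rw [← FreeGroup.one_eq_mk, map_one]; rfl
  | cons x v ih =>
    intro g hg
    rw [psi_cons]
    have h1 := ih (g * FreeGroup.mk [x]) (by
      intro p hp
      have := hg (x :: p) (by simpa using hp)
      rw [mul_assoc, FreeGroup.mul_mk]; exact this)
    rw [QuotientGroup.mk_mul, mul_inv_rev, mul_assoc] at h1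
    rw [h1, mul_one, psi_letter, if_neg]
    rintro ⟨h2, h3⟩
    have a1 : (QuotientGroup.mk g : FreeGroup (Fin m) ⧸ R) ≠ 1 := by
      have := hg [] (by simp)
      rw [← FreeGroup.one_eq_mk, mul_one] at this
      rwa [Ne, QuotientGroup.eq_one_iff]
    have a2 : (QuotientGroup.mk g : FreeGroup (Fin m) ⧸ R) * (QuotientGroup.mk (FreeGroup.mk [x])) ≠ 1 := by
      have := hg [x] (by simp)
      rwa [Ne, ← QuotientGroup.mk_mul, QuotientGroup.eq_one_iff]
    rw [inv_mul_eq_iff_eq_mul] at h2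
    obtain ⟨i, b⟩ := l
    obtain ⟨j, c⟩ := x
    obtain rfl : i = j := h3
    have key : FreeGroup.mk [(i, false)] = (FreeGroup.mk [(i, true)])⁻¹ := rfl
    cases b <;> cases c <;> simp only [eG, if_true, if_false, Bool.false_eq_true] at h2
    · exact a1 (by simpa using h2.symm)
    · rw [mul_one] at h2
      rw [← h2, key, QuotientGroup.mk_inv, inv_mul_cancel] at a2
      exact a2 rfl
    · exact a2 h2.symm
    · exact a1 (by simpa using h2.symm)

/-- No nonempty subword lies in `R`. -/
def NoLoop {m : ℕ} (R : Subgroup (FreeGroup (Fin m))) (u : List (Fin m × Bool)) : Prop :=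
  ∀ p, p <:+: u → p ≠ [] → FreeGroup.mk p ∉ R

theorem NoLoop.tail {m : ℕ} {R : Subgroup (FreeGroup (Fin m))} {x : Fin m × Bool}
    {u : List (Fin m × Bool)} (h : NoLoop R (x :: u)) : NoLoop R u :=
  fun p hp => h p (hp.trans (List.suffix_cons x u).isInfix)

open Classical in
theorem at_edge {m : ℕ} {R : Subgroup (FreeGroup (Fin m))} [R.Normal] {x : Fin m × Bool}
    {u : List (Fin m × Bool)} (h : NoLoop R (x :: u)) (l : Fin m × Bool) :
    (psi R (FreeGroup.mk (x :: u))).left (eG R l) l.1 =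
      if eG R l = eG R x ∧ l.1 = x.1 then
      Multiplicative.ofAdd (if x.2 then (1 : ℤ) else -1) else 1 := by
  rw [psi_cons, psi_letter, rest, mul_one]
  intro p hp
  rw [FreeGroup.mul_mk]
  apply h
  · exact List.IsPrefix.isInfix (by simpa using hp)
  · simp

theorem word_inj {m : ℕ} (R : Subgroup (FreeGroup (Fin m))) [R.Normal]
    (u : List (Fin m × Bool)) : ∀ v, NoLoop R u → NoLoop R v → u.length = v.length →
    psi R (FreeGroup.mk u) = psi R (FreeGroup.mk v) → u = v := by
  induction u with
  | nil => intro v _ _ h _; exact (List.length_eq_zero_iff.1 h.symm).symm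
  | cons x u ih =>
    rintro (_ | ⟨y, v⟩) hu hv hl h
    · simp at hl
    · have h1 := at_edge hu x
      rw [h, at_edge hv x, if_pos (⟨rfl, rfl⟩ : eG R x = eG R x ∧ x.1 = x.1)] at h1
      have hxy : x = y := by
        obtain ⟨i, b⟩ := x
        obtain ⟨j, c⟩ := y
        by_cases hc : eG R (i, b) = eG R (j, c) ∧ i = j
        · rw [if_pos hc] at h1
          obtain ⟨_, rfl⟩ := hc
          cases b <;> cases c <;> first | rfl | (exfalso; have h2 := congrArg Multiplicative.toAdd h1; norm_num at h2)
        · rw [if_neg hc] at h1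
          exfalso
          have h2 := congrArg Multiplicative.toAdd h1
          cases b <;> norm_num at h2
      subst hxy
      congr 1
      apply ih v hu.tail hv.tail (by simpa using hl)
      have e : ∀ w, FreeGroup.mk (x :: w) = FreeGroup.mk [x] * FreeGroup.mk w := by
        intro w; rw [FreeGroup.mul_mk]; rfl
      rw [e u, e v, map_mul, map_mul] at h
      exact mul_left_cancel h

end GW

namespace GW

section height
variable {m : ℕ} {φ : FreeGroup (Fin m) → ℤ}

theorem phi_append (hφ : ∀ x y : FreeGroup (Fin m), φ (x * y) = φ x + φ y)
    (u v : List (Fin m × Bool)) :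
    φ (FreeGroup.mk (u ++ v)) = φ (FreeGroup.mk u) + φ (FreeGroup.mk v) := by
  rw [← FreeGroup.mul_mk, hφ]

theorem phi_nil (hφ : ∀ x y : FreeGroup (Fin m), φ (x * y) = φ x + φ y) :
    φ (FreeGroup.mk []) = 0 := by
  have := phi_append hφ [] []
  simp only [List.append_nil] at this
  omega

theorem phi_ge (hφ : ∀ x y : FreeGroup (Fin m), φ (x * y) = φ x + φ y) {C : ℤ}
    (ha : ∀ l : Fin m × Bool, φ (FreeGroup.mk [l]) ≤ C) (u : List (Fin m × Bool)) :
    -(C * u.length) ≤ φ (FreeGroup.mk u) := by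
  induction u with
  | nil => rw [phi_nil hφ]; simp
  | cons x u ih =>
    have h1 := phi_append hφ [x] u
    have h2 := ha (x.1, !x.2)
    have h3 := hφ (FreeGroup.mk [x]) (FreeGroup.mk [(x.1, !x.2)])
    have h4 : FreeGroup.mk [x] * FreeGroup.mk [(x.1, !x.2)] = FreeGroup.mk [] := by
      have : FreeGroup.mk [(x.1, !x.2)] = (FreeGroup.mk [x])⁻¹ := by simp [FreeGroup.invRev]
      rw [this, mul_inv_cancel]; rfl
    rw [h4, phi_nil hφ] at h3
    simp only [List.singleton_append] at h1
    rw [h1]; push_cast [List.length_cons]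
    linarith

theorem good_prefix {k : ℕ} (hk : 2 ≤ k) {a : Fin m × Bool}
    (hφ : ∀ x y : FreeGroup (Fin m), φ (x * y) = φ x + φ y)
    (ha : ∀ l : Fin m × Bool, φ (FreeGroup.mk [l]) ≤ φ (FreeGroup.mk [a]))
    (hC : 0 ≤ φ (FreeGroup.mk [a]))
    {w p : List (Fin m × Bool)} (hw : w.head? = some a) (hp : p <+: w) (hlen : p.length + 1 ≤ k) :
    -(φ (FreeGroup.mk [a]) * (k - 2)) ≤ φ (FreeGroup.mk p) := by
  have hk' : (2 : ℤ) ≤ k := by exact_mod_cast hk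
  cases p with
  | nil => rw [phi_nil hφ]; nlinarith
  | cons x p =>
    obtain ⟨t, rfl⟩ := hp
    obtain rfl : x = a := by simpa using hw
    have h1 := phi_append hφ [x] p
    have h2 := phi_ge hφ ha p
    simp only [List.singleton_append] at h1
    have h3 : (p.length : ℤ) + 2 ≤ k := by simp at hlen; omega
    rw [h1]
    nlinarith

theorem prefix_bound {k : ℕ} (hk : 2 ≤ k) {a : Fin m × Bool}
    (hφ : ∀ x y : FreeGroup (Fin m), φ (x * y) = φ x + φ y)
    (ha : ∀ l : Fin m × Bool, φ (FreeGroup.mk [l]) ≤ φ (FreeGroup.mk [a]))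
    (hC : 0 ≤ φ (FreeGroup.mk [a]))
    (L : List (List (Fin m × Bool))) :
    (∀ w ∈ L, w.length = k ∧ IsGoodWord φ a w) → ∀ p, p <+: L.flatten →
    ∃ q : ℤ, 0 ≤ q ∧ (p.length : ℤ) ≤ q * k + (k - 1) ∧
      q - φ (FreeGroup.mk [a]) * (k - 2) ≤ φ (FreeGroup.mk p) := by
  have hk' : (2 : ℤ) ≤ k := by exact_mod_cast hk
  induction L with
  | nil =>
    intro _ p hp
    obtain rfl : p = [] := by simpa using hp
    refine ⟨0, le_rfl, by simp; omega, ?_⟩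
    rw [phi_nil hφ]; nlinarith
  | cons w L ih =>
    intro hL p hp
    have hw := hL w (by simp)
    by_cases hlen : p.length + 1 ≤ k
    · refine ⟨0, le_rfl, by omega, ?_⟩
      have := good_prefix hk hφ ha hC hw.2.2.1
        (List.prefix_of_prefix_length_le hp (by simp) (by omega)) hlen
      linarith
    · rw [List.flatten_cons] at hp
      have h1 : w <+: p := List.prefix_of_prefix_length_le (by simp) hp (by omega)
      obtain ⟨p', rfl⟩ := h1
      obtain ⟨q, hq, h2, h3⟩ := ih (fun w hw => hL w (by simp [hw])) p' (by simpa using hp)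
      refine ⟨q + 1, by omega, ?_, ?_⟩
      · rw [List.length_append, hw.1]; push_cast; linarith
      · rw [phi_append hφ]
        have := hw.2.2.2.2
        linarith

theorem infix_bound {k : ℕ} (hk : 2 ≤ k) {a : Fin m × Bool}
    (hφ : ∀ x y : FreeGroup (Fin m), φ (x * y) = φ x + φ y)
    (ha : ∀ l : Fin m × Bool, φ (FreeGroup.mk [l]) ≤ φ (FreeGroup.mk [a]))
    (hC : 0 ≤ φ (FreeGroup.mk [a]))
    (L : List (List (Fin m × Bool))) :
    (∀ w ∈ L, w.length = k ∧ IsGoodWord φ a w) → ∀ p, p <:+: L.flatten →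
    ∃ q : ℤ, 0 ≤ q ∧ (p.length : ℤ) ≤ q * k + (2 * k - 2) ∧
      q - φ (FreeGroup.mk [a]) * (2 * k - 3) ≤ φ (FreeGroup.mk p) := by
  have hk' : (2 : ℤ) ≤ k := by exact_mod_cast hk
  -- a proper subword of a block
  have short : ∀ s : List (Fin m × Bool), s.length + 1 ≤ k →
      -(φ (FreeGroup.mk [a]) * (k - 1)) ≤ φ (FreeGroup.mk s) := by
    intro s hs
    have := phi_ge hφ ha s
    have h3 : (s.length : ℤ) + 1 ≤ k := by omega
    nlinarith
  induction L with
  | nil =>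
    intro _ p hp
    obtain rfl : p = [] := by simpa using hp
    refine ⟨0, le_rfl, by simp; omega, ?_⟩
    rw [phi_nil hφ]; nlinarith
  | cons w L ih =>
    intro hL p hp
    have hw := hL w (by simp)
    have hL' : ∀ w ∈ L, w.length = k ∧ IsGoodWord φ a w := fun w hw => hL w (by simp [hw])
    rw [List.flatten_cons, List.infix_append_iff] at hp
    rcases hp with hp | hp | ⟨s, t, rfl, hs, ht⟩
    · by_cases hlen : p.length + 1 ≤ k
      · refine ⟨0, le_rfl, by omega, ?_⟩
        have := short p hlen
        nlinarith
      · have h1 := hp.length_le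
        obtain rfl : p = w := hp.eq_of_length (by omega)
        refine ⟨0, le_rfl, by omega, ?_⟩
        have := hw.2.2.2.2
        nlinarith
    · exact ih hL' p hp
    · obtain ⟨q, hq, h2, h3⟩ := prefix_bound hk hφ ha hC L hL' t ht
      by_cases hlen : s.length + 1 ≤ k
      · refine ⟨q, hq, by rw [List.length_append]; push_cast; omega, ?_⟩
        have := short s hlen
        rw [phi_append hφ]
        linarith
      · have h1 := hs.length_le
        obtain rfl : s = w := hs.eq_of_length (by omega)
        refine ⟨q + 1, by omega, ?_, ?_⟩
        · rw [List.length_append, hw.1]; push_cast; linarith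
        · rw [phi_append hφ]
          have := hw.2.2.2.2
          nlinarith

theorem flatten_reduced {k : ℕ} (hk : 2 ≤ k) {a : Fin m × Bool}
    (L : List (List (Fin m × Bool)))
    (hL : ∀ w ∈ L, w.length = k ∧ IsGoodWord φ a w) : FreeGroup.IsReduced L.flatten := by
  have hne : [] ∉ L := by
    intro h
    have := (hL _ h).1
    simp at this; omega
  rw [FreeGroup.IsReduced, List.isChain_flatten hne]
  refine ⟨fun w hw => FreeGroup.isReduced_iff_reduce_eq.2 (hL w hw).2.1, ?_⟩
  rw [List.isChain_iff_forall_rel_of_append_cons_cons]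
  intro u v l₁ l₂ e x hx y hy hxy
  have hu := (hL u (by simp [e])).2
  have hv := (hL v (by simp [e])).2
  have h1 := hu.2.2.1
  have h2 := hv.2.1
  rw [Option.mem_def] at hx hy
  rw [hx] at h1
  rw [hy] at h2
  obtain rfl : y = a := by simpa using h2
  by_contra hb
  apply h1
  congr 1
  ext
  · rw [hxy]
  · revert hb; cases x.2 <;> cases y.2 <;> simp

theorem noLoop {k : ℕ} (hk : 2 ≤ k) {a : Fin m × Bool}
    (hφ : ∀ x y : FreeGroup (Fin m), φ (x * y) = φ x + φ y)
    (ha : ∀ l : Fin m × Bool, φ (FreeGroup.mk [l]) ≤ φ (FreeGroup.mk [a]))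
    (R : Subgroup (FreeGroup (Fin m)))
    (hker : ∀ g ∈ R, φ g = 0)
    (hρ : ∀ g ∈ R, g ≠ 1 →
      φ (FreeGroup.mk [a]) * k * (2 * (k : ℤ) - 3) + 2 * k - 2 < (FreeGroup.norm g : ℤ))
    (L : List (List (Fin m × Bool)))
    (hL : ∀ w ∈ L, w.length = k ∧ IsGoodWord φ a w) : NoLoop R L.flatten := by
  intro p hp hne hR
  have hC : 0 ≤ φ (FreeGroup.mk [a]) := by
    have := phi_ge hφ ha [a]
    simp at this; linarith
  have hred := ((flatten_reduced hk L hL).infix hp).reduce_eq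
  have hnorm : FreeGroup.norm (FreeGroup.mk p) = p.length := by
    rw [FreeGroup.norm, FreeGroup.toWord_mk, hred]
  have h1 : FreeGroup.mk p ≠ 1 := by
    intro h
    rw [h, FreeGroup.norm_one] at hnorm
    exact hne (List.length_eq_zero_iff.1 hnorm.symm)
  have h2 := hρ _ hR h1
  rw [hnorm] at h2
  obtain ⟨q, hq, h3, h4⟩ := infix_bound hk hφ ha hC L hL p hp
  rw [hker _ hR] at h4
  have hk' : (2 : ℤ) ≤ k := by exact_mod_cast hk
  have : q * k ≤ (φ (FreeGroup.mk [a]) * (2 * k - 3)) * k :=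
    mul_le_mul_of_nonneg_right (by linarith) (by linarith)
  linarith

end height

theorem wordEval_mk {m : ℕ} (N : Subgroup (FreeGroup (Fin m))) [N.Normal]
    (w : List (Fin m × Bool)) :
    wordEval (fun i => (QuotientGroup.mk (FreeGroup.of i) : FreeGroup (Fin m) ⧸ N)) w =
      QuotientGroup.mk (FreeGroup.mk w) := by
  induction w with
  | nil => rfl
  | cons x w ih =>
    have : FreeGroup.mk (x :: w) = FreeGroup.mk [x] * FreeGroup.mk w := by
      rw [FreeGroup.mul_mk]; rfl
    rw [this, QuotientGroup.mk_mul, ← ih, wordEval, wordEval, List.map_cons, List.prod_cons]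
    congr 1
    obtain ⟨i, b⟩ := x
    cases b
    · simp [FreeGroup.of, ← QuotientGroup.mk_inv, FreeGroup.invRev]
    · rfl

theorem ball_bound {m : ℕ} {G : Type*} [Group G] (σ : Fin m → G) (n : ℕ) :
    (ball σ n).Finite ∧ (ball σ n).ncard ≤ (2 * m + 1) ^ n := by
  induction n with
  | zero =>
    have : ball σ 0 = {1} := by
      ext g
      simp only [ball, Nat.le_zero, List.length_eq_zero_iff, Set.mem_ofPred_eq, exists_eq_left,
        Set.mem_singleton_iff]
      exact eq_comm
    simp [this]
  | succ n ih =>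
    let f : Option (Fin m × Bool) × G → G := fun p =>
      (match p.1 with | none => 1 | some x => wordEval σ [x]) * p.2
    have hsub : ball σ (n + 1) ⊆ f '' (Set.univ ×ˢ ball σ n) := by
      rintro g ⟨w, hw, rfl⟩
      cases w with
      | nil => exact ⟨(none, 1), ⟨trivial, [], by simp, rfl⟩, by simp [f, wordEval]⟩
      | cons x w =>
        exact ⟨(some x, wordEval σ w), ⟨trivial, w, by simpa using hw, rfl⟩, by simp [f, wordEval]⟩
    have hfin : ((Set.univ : Set (Option (Fin m × Bool))) ×ˢ ball σ n).Finite :=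
      Set.finite_univ.prod ih.1
    refine ⟨(hfin.image f).subset hsub, ?_⟩
    calc (ball σ (n + 1)).ncard ≤ (f '' (Set.univ ×ˢ ball σ n)).ncard :=
          Set.ncard_le_ncard hsub (hfin.image f)
      _ ≤ ((Set.univ : Set (Option (Fin m × Bool))) ×ˢ ball σ n).ncard := Set.ncard_image_le hfin
      _ = (2 * m + 1) * (ball σ n).ncard := by
          rw [Set.ncard_prod, Set.ncard_univ]; simp [mul_comm]
      _ ≤ (2 * m + 1) * (2 * m + 1) ^ n := Nat.mul_le_mul_left _ ih.2
      _ = _ := by ring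

end GW

/-- If `R ⊴ F_m` is contained in the kernel of the surjective
homomorphism `φ : F_m → ℤ`, `a` is a letter of maximal `φ`-value, `C = φ(a)`, and `k ≥ 2`
satisfies `ρ(R) > Ck(2k-3) + 2k - 2` (every nontrivial element of `R` is longer than this
bound), then the growth rate of `F_m/R'` w.r.t. the natural generators is at least
`d_k^{1/k}`, where `d_k` is the number of good words of length `k`. -/
theorem growth_rate_ge_good_words_root (m k : ℕ) (hm : 2 ≤ m) (hk : 2 ≤ k)
    (φ : FreeGroup (Fin m) → ℤ)
    (hφ : ∀ x y : FreeGroup (Fin m), φ (x * y) = φ x + φ y)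
    (hsurj : Function.Surjective φ)
    (a : Fin m × Bool)
    (ha : ∀ ℓ : Fin m × Bool, φ (FreeGroup.mk [ℓ]) ≤ φ (FreeGroup.mk [a]))
    (R : Subgroup (FreeGroup (Fin m))) [R.Normal]
    (hker : ∀ g ∈ R, φ g = 0)
    (hρ : ∀ g ∈ R, g ≠ 1 →
      φ (FreeGroup.mk [a]) * k * (2 * (k : ℤ) - 3) + 2 * k - 2 < (FreeGroup.norm g : ℤ)) :
    ((Set.ncard {w : List (Fin m × Bool) | w.length = k ∧ IsGoodWord φ a w} : ℝ))
        ^ (1 / (k : ℝ)) ≤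
      growthRate (fun i =>
        (QuotientGroup.mk (FreeGroup.of i) : FreeGroup (Fin m) ⧸ ⁅R, R⁆)) := by

  classical
  set S : Set (List (Fin m × Bool)) := {w | w.length = k ∧ IsGoodWord φ a w} with hS
  set σ : Fin m → FreeGroup (Fin m) ⧸ ⁅R, R⁆ := fun i => QuotientGroup.mk (FreeGroup.of i) with hσ
  have hSfin : S.Finite := (List.finite_length_eq (Fin m × Bool) k).subset fun w hw => hw.1
  have hcount : ∀ n : ℕ, S.ncard ^ n ≤ (ball σ (n * k)).ncard := by
    intro n
    let F : (Fin n → S) → FreeGroup (Fin m) ⧸ ⁅R, R⁆ := fun f =>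
      QuotientGroup.mk (FreeGroup.mk (List.ofFn fun i => (f i : List (Fin m × Bool))).flatten)
    have hmem : ∀ f : Fin n → S, ∀ w ∈ (List.ofFn fun i => (f i : List (Fin m × Bool))),
        w.length = k ∧ IsGoodWord φ a w := by
      intro f w hw
      obtain ⟨i, rfl⟩ := (List.mem_ofFn' _ _).1 hw
      exact (f i).2
    have hlen : ∀ f : Fin n → S,
        (List.map List.length (List.ofFn fun i => (f i : List (Fin m × Bool)))) =
          List.replicate n k := by
      intro f
      rw [List.eq_replicate_iff]
      refine ⟨by simp, ?_⟩
      intro b hb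
      obtain ⟨w, hw, rfl⟩ := List.mem_map.1 hb
      exact (hmem f w hw).1
    have hinj : Function.Injective F := by
      intro f g hfg
      have h1 : GW.psi R (FreeGroup.mk (List.ofFn fun i => (f i : List (Fin m × Bool))).flatten) =
          GW.psi R (FreeGroup.mk (List.ofFn fun i => (g i : List (Fin m × Bool))).flatten) := by
        have := GW.psi_comm R (QuotientGroup.eq.1 hfg)
        rw [map_mul, map_inv, inv_mul_eq_one] at this
        exact this
      have h2 := GW.word_inj R _ _ (GW.noLoop hk hφ ha R hker hρ _ (hmem f))
        (GW.noLoop hk hφ ha R hker hρ _ (hmem g))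
        (by rw [List.length_flatten, List.length_flatten, hlen, hlen]) h1
      have h3 := List.eq_iff_flatten_eq.2 ⟨h2, by rw [hlen, hlen]⟩
      have h4 := List.ofFn_injective h3
      funext i
      exact Subtype.ext (congrFun h4 i)
    have hrange : Set.range F ⊆ ball σ (n * k) := by
      rintro _ ⟨f, rfl⟩
      refine ⟨_, ?_, GW.wordEval_mk _ _⟩
      rw [List.length_flatten, hlen]; simp
    calc S.ncard ^ n = Nat.card (Fin n → S) := by
          rw [Nat.card_fun]; simp [Nat.card_coe_set_eq]
      _ = (Set.range F).ncard := by
          rw [← Nat.card_coe_set_eq, Nat.card_range_of_injective hinj]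
      _ ≤ _ := Set.ncard_le_ncard hrange (GW.ball_bound σ _).1
  unfold growthRate
  apply Filter.le_limsup_of_frequently_le
  · rw [Filter.frequently_atTop]
    intro N
    refine ⟨(N + 1) * k, by nlinarith, ?_⟩
    have hk0 : (k : ℝ) ≠ 0 := by positivity
    have hN0 : ((N + 1 : ℕ) : ℝ) ≠ 0 := by positivity
    have h1 : ((S.ncard : ℝ)) ^ (1 / (k : ℝ)) =
        (((S.ncard ^ (N + 1) : ℕ)) : ℝ) ^ (1 / (((N + 1) * k : ℕ) : ℝ)) := by
      rw [Nat.cast_pow, ← Real.rpow_natCast, ← Real.rpow_mul (by positivity)]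
      congr 1
      rw [Nat.cast_mul]
      field_simp
    rw [h1]
    exact Real.rpow_le_rpow (by positivity) (by exact_mod_cast hcount (N + 1)) (by positivity)
  · refine Filter.isBoundedUnder_of_eventually_le (a := ((2 * m + 1 : ℕ) : ℝ)) ?_
    filter_upwards [Filter.eventually_gt_atTop 0] with n hn
    have h1 : ((ball σ n).ncard : ℝ) ≤ ((2 * m + 1 : ℕ) : ℝ) ^ n := by
      exact_mod_cast (GW.ball_bound σ n).2
    calc ((ball σ n).ncard : ℝ) ^ (1 / (n : ℝ)) ≤ (((2 * m + 1 : ℕ) : ℝ) ^ n) ^ (1 / (n : ℝ)) :=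
          Real.rpow_le_rpow (by positivity) h1 (by positivity)
      _ = _ := by
          rw [one_div, Real.pow_rpow_inv_natCast (by positivity) hn.ne']
end

section
/- Let m ≥ 2, let F_m be a free group with free basis A of size m, and let φ : F_m → ℤ be a surjective homomorphism. Suppose ker φ ≥ R₁ ≥ R₂ ≥ ⋯ ≥ R_n ≥ ⋯ is a descending sequence of normal subgroups of F_m whose intersection is trivial. Then the growth rates of the groups F_m/R_n' with respect to the images of A approach 2m-1 as n → ∞; that is, lim_{n→∞} ω(F_m/R_n', A) = 2m-1. -/
open Filter Topology

/-! ### Heights of words -/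

/-- value of a letter under the height function -/
def lval {m : ℕ} (f : Fin m → ℤ) (x : Fin m × Bool) : ℤ := if x.2 then f x.1 else - f x.1

/-- height of a word -/
def ht {m : ℕ} (f : Fin m → ℤ) (l : List (Fin m × Bool)) : ℤ := (l.map (lval f)).sum

/-- all nonempty suffixes of the word have height (shifted by `c`) satisfying `p` -/
def sufH {m : ℕ} (f : Fin m → ℤ) (p : ℤ → Prop) (c : ℤ) : List (Fin m × Bool) → Prop
  | [] => True
  | x :: l => p (c + ht f (x :: l)) ∧ sufH f p c l

@[simp] lemma ht_nil {m : ℕ} (f : Fin m → ℤ) : ht f [] = 0 := rfl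

@[simp] lemma ht_cons {m : ℕ} (f : Fin m → ℤ) (x : Fin m × Bool) (l) :
    ht f (x :: l) = lval f x + ht f l := by simp [ht]

@[simp] lemma ht_append {m : ℕ} (f : Fin m → ℤ) (l l' : List (Fin m × Bool)) :
    ht f (l ++ l') = ht f l + ht f l' := by simp [ht]

lemma sufH_append {m : ℕ} (f : Fin m → ℤ) (p : ℤ → Prop) (c : ℤ) (u v : List (Fin m × Bool)) :
    sufH f p c (u ++ v) ↔ sufH f p (c + ht f v) u ∧ sufH f p c v := by
  induction u with
  | nil => simp [sufH]
  | cons x u ih =>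
    simp only [List.cons_append, sufH, ih, ht_cons, ht_append]
    rw [show c + ht f v + (lval f x + ht f u) = c + (lval f x + (ht f u + ht f v)) by ring]
    tauto

lemma sufH_mono {m : ℕ} (f : Fin m → ℤ) (p q : ℤ → Prop) (c d : ℤ)
    (h : ∀ z, p (c + z) → q (d + z)) (u : List (Fin m × Bool)) (hu : sufH f p c u) :
    sufH f q d u := by
  induction u with
  | nil => trivial
  | cons x u ih => exact ⟨h _ hu.1, ih hu.2⟩

/-! ### The flow action -/

section flow

variable {G M : Type*} [Group G] [AddCommGroup M]

/-- skew translation -/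
def skew (a : G) (c : G → M) : Equiv.Perm (G × M) where
  toFun p := (a * p.1, p.2 + c p.1)
  invFun p := (a⁻¹ * p.1, p.2 - c (a⁻¹ * p.1))
  left_inv p := by simp
  right_inv p := by simp

end flow

open Classical in
/-- truncated boundary of an edge -/
noncomputable def edgeC {G : Type*} [Group G] (H : G → ℤ) (T : ℤ) (a g : G) : G →₀ ℤ :=
  if H g ≤ T ∧ H (a * g) ≤ T then Finsupp.single (a * g) 1 - Finsupp.single g 1 else 0

section rho

variable {m : ℕ} {G : Type*} [Group G] (H : G → ℤ) (T : ℤ) (σ : Fin m → G)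

/-- the flow action -/
noncomputable def rho : FreeGroup (Fin m) →* Equiv.Perm (G × (G →₀ ℤ)) :=
  FreeGroup.lift (fun i => skew (σ i) (edgeC H T (σ i)))

lemma rho_form (w : FreeGroup (Fin m)) :
    ∃ c : G → (G →₀ ℤ), ∀ p, rho H T σ w p = (FreeGroup.lift σ w * p.1, p.2 + c p.1) := by
  induction w using FreeGroup.induction_on with
  | C1 => exact ⟨0, by simp⟩
  | of i => exact ⟨edgeC H T (σ i), fun p => by simp [rho, skew]⟩
  | inv_of i _ =>
    refine ⟨fun g => - edgeC H T (σ i) ((σ i)⁻¹ * g), fun p => ?_⟩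
    simp [rho, skew, Equiv.Perm.inv_def, Equiv.symm, sub_eq_add_neg]
  | mul x y hx hy =>
    obtain ⟨c, hc⟩ := hx
    obtain ⟨d, hd⟩ := hy
    refine ⟨fun g => d g + c (FreeGroup.lift σ y * g), fun p => ?_⟩
    simp [hc, hd, mul_assoc, add_assoc]

open scoped commutatorElement in
lemma rho_comm (x y : FreeGroup (Fin m)) (hx : FreeGroup.lift σ x = 1)
    (hy : FreeGroup.lift σ y = 1) : rho H T σ ⁅x, y⁆ = 1 := by
  rw [map_commutatorElement, commutatorElement_eq_one_iff_mul_comm]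
  obtain ⟨c, hc⟩ := rho_form H T σ x
  obtain ⟨d, hd⟩ := rho_form H T σ y
  ext1 p
  simp only [Equiv.Perm.mul_apply, hc, hd, hx, hy, one_mul, add_assoc, add_comm (c p.1)]

/-- the value of a letter in the group -/
def gval (x : Fin m × Bool) : G := if x.2 then σ x.1 else (σ x.1)⁻¹

lemma mk_cons (x : Fin m × Bool) (l : List (Fin m × Bool)) :
    FreeGroup.mk (x :: l) = FreeGroup.mk [x] * FreeGroup.mk l := by
  simp

lemma lift_letter (x : Fin m × Bool) : FreeGroup.lift σ (FreeGroup.mk [x]) = gval σ x := by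
  obtain ⟨i, b⟩ := x
  cases b <;> simp [gval, FreeGroup.lift_mk]

lemma rho_letter (x : Fin m × Bool) (p : G × (G →₀ ℤ)) :
    rho H T σ (FreeGroup.mk [x]) p = (gval σ x * p.1, p.2 + edgeC H T (gval σ x) p.1) := by
  obtain ⟨i, b⟩ := x
  cases b
  · simp [rho, gval, FreeGroup.lift_mk, skew, Equiv.Perm.inv_def, Equiv.symm, edgeC]
    by_cases h1 : H p.1 ≤ T <;> by_cases h2 : H ((σ i)⁻¹ * p.1) ≤ T <;> simp [h1, h2] <;> abel
  · simp [rho, gval, FreeGroup.lift_mk, skew]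

variable (f : Fin m → ℤ) (hH1 : H 1 = 0) (hH : ∀ x g, H (gval σ x * g) = lval f x + H g)

include hH in
lemma H_word (l : List (Fin m × Bool)) (g : G) :
    H (FreeGroup.lift σ (FreeGroup.mk l) * g) = ht f l + H g := by
  induction l with
  | nil => simp [FreeGroup.lift_mk]
  | cons x l ih => rw [mk_cons, map_mul, mul_assoc, lift_letter, hH, ih, ht_cons]; ring

include hH hH1 in
lemma rho_low (hT : 0 ≤ T) (l : List (Fin m × Bool)) (hl : sufH f (· ≤ T) 0 l) :
    rho H T σ (FreeGroup.mk l) (1, 0) = (FreeGroup.lift σ (FreeGroup.mk l),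
      Finsupp.single (FreeGroup.lift σ (FreeGroup.mk l)) 1 - Finsupp.single 1 1) := by
  induction l with
  | nil => simp [FreeGroup.lift_mk, ← FreeGroup.one_eq_mk]
  | cons x l ih =>
    rw [mk_cons, map_mul, Equiv.Perm.mul_apply, ih hl.2, rho_letter, map_mul, lift_letter]
    have h1 := H_word H σ f hH (x :: l) 1
    have h2 := H_word H σ f hH l 1
    rw [mk_cons, map_mul, lift_letter] at h1
    rw [hH1, mul_one, add_zero] at h1 h2
    have h3 : ht f l ≤ T := by
      cases l with
      | nil => simpa
      | cons y l => simpa using hl.2.1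
    have h4 : ht f (x :: l) ≤ T := by simpa using hl.1
    simp only [edgeC]
    rw [if_pos ⟨by omega, by omega⟩]
    simp

include hH in
lemma rho_high (l : List (Fin m × Bool)) (hl : sufH f (0 < ·) 0 l) (g : G) (hg : H g = T)
    (v : G →₀ ℤ) :
    rho H T σ (FreeGroup.mk l) (g, v) = (FreeGroup.lift σ (FreeGroup.mk l) * g, v) := by
  induction l with
  | nil => simp [FreeGroup.lift_mk, ← FreeGroup.one_eq_mk]
  | cons x l ih =>
    rw [mk_cons, map_mul, Equiv.Perm.mul_apply, ih hl.2, rho_letter, map_mul, lift_letter]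
    have h1 := H_word H σ f hH (x :: l) g
    rw [mk_cons, map_mul, lift_letter, mul_assoc] at h1
    have h4 : 0 < ht f (x :: l) := by simpa using hl.1
    simp only [edgeC]
    rw [if_neg (fun h => by omega)]
    simp [mul_assoc]

include hH hH1 in
lemma rho_decode (l l' u u' : List (Fin m × Bool)) (hT : 0 ≤ T)
    (hl : sufH f (0 < ·) 0 l) (hl' : sufH f (0 < ·) 0 l')
    (hu : sufH f (· ≤ T) 0 u) (hu' : sufH f (· ≤ T) 0 u') (hTu : ht f u = T) (hTu' : ht f u' = T)
    (h : rho H T σ (FreeGroup.mk (l ++ u)) = rho H T σ (FreeGroup.mk (l' ++ u'))) :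
    FreeGroup.lift σ (FreeGroup.mk u) = FreeGroup.lift σ (FreeGroup.mk u') := by
  have key : ∀ l u : List (Fin m × Bool), sufH f (0 < ·) 0 l → sufH f (· ≤ T) 0 u → ht f u = T →
      (rho H T σ (FreeGroup.mk (l ++ u)) (1, 0)).2 =
      Finsupp.single (FreeGroup.lift σ (FreeGroup.mk u)) 1 - Finsupp.single 1 1 := by
    intro l u hl hu hTu
    rw [← FreeGroup.mul_mk, map_mul, Equiv.Perm.mul_apply, rho_low H T σ f hH1 hH hT u hu,
      rho_high H T σ f hH l hl]
    have := H_word H σ f hH u 1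
    simp only [mul_one] at this
    omega
  have h1 := key l u hl hu hTu
  rw [h, key l' u' hl' hu' hTu'] at h1
  have h2 := sub_left_injective h1
  exact ((Finsupp.single_left_inj one_ne_zero).1 h2).symm

end rho

/-- Decoding in `F / R'`. -/
lemma decode {m : ℕ} (R : Subgroup (FreeGroup (Fin m))) [R.Normal]
    (φ : FreeGroup (Fin m) → ℤ)
    (hφ : ∀ x y : FreeGroup (Fin m), φ (x * y) = φ x + φ y)
    (hker : ∀ g ∈ R, φ g = 0) (T : ℤ) (hT : 0 ≤ T)
    (l l' u u' : List (Fin m × Bool))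
    (hl : sufH (fun i => φ (FreeGroup.of i)) (0 < ·) 0 l)
    (hl' : sufH (fun i => φ (FreeGroup.of i)) (0 < ·) 0 l')
    (hu : sufH (fun i => φ (FreeGroup.of i)) (· ≤ T) 0 u)
    (hu' : sufH (fun i => φ (FreeGroup.of i)) (· ≤ T) 0 u')
    (hTu : ht (fun i => φ (FreeGroup.of i)) u = T)
    (hTu' : ht (fun i => φ (FreeGroup.of i)) u' = T)
    (h : (QuotientGroup.mk (FreeGroup.mk (l ++ u)) : FreeGroup (Fin m) ⧸ ⁅R, R⁆) =
      QuotientGroup.mk (FreeGroup.mk (l' ++ u'))) :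
    (FreeGroup.mk u)⁻¹ * FreeGroup.mk u' ∈ R := by
  have hφ1 : φ 1 = 0 := by have := hφ 1 1; simp at this; exact this
  have hφi : ∀ x, φ x⁻¹ = - φ x := fun x => by
    have := hφ x⁻¹ x; simp [hφ1] at this; omega
  let σ : Fin m → FreeGroup (Fin m) ⧸ R := fun i => QuotientGroup.mk (FreeGroup.of i)
  have hσ : ∀ w, FreeGroup.lift σ w = QuotientGroup.mk w := by
    intro w
    have : FreeGroup.lift σ = QuotientGroup.mk' R := by ext i; simp [σ]
    rw [this]; rfl
  let H : FreeGroup (Fin m) ⧸ R → ℤ := Quotient.lift φ (by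
    intro a b hab
    have h1 : a⁻¹ * b ∈ R := QuotientGroup.leftRel_apply.1 hab
    have := hker _ h1
    rw [hφ, hφi] at this; omega)
  have hHmk : ∀ w : FreeGroup (Fin m), H (QuotientGroup.mk w) = φ w := fun w => rfl
  have hH1 : H 1 = 0 := hφ1
  have hH : ∀ x g, H (gval σ x * g) = lval (fun i => φ (FreeGroup.of i)) x + H g := by
    rintro ⟨i, b⟩ g
    induction g using QuotientGroup.induction_on with | H z => ?_
    cases b
    · simp only [gval, lval, σ, ← QuotientGroup.mk_inv, ← QuotientGroup.mk_mul, hHmk, hφ, hφi]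
      simp only [Bool.false_eq_true, if_false, ← QuotientGroup.mk_inv, ← QuotientGroup.mk_mul, hHmk, hφ, hφi]
    · simp only [gval, lval, σ, if_true, ← QuotientGroup.mk_mul, hHmk, hφ]
  have hle : ⁅R, R⁆ ≤ (rho H T σ).ker := by
    rw [Subgroup.commutator_le]
    intro x hx y hy
    exact rho_comm H T σ x y (by rw [hσ]; exact (QuotientGroup.eq_one_iff _).2 hx)
      (by rw [hσ]; exact (QuotientGroup.eq_one_iff _).2 hy)
  have h2 := rho_decode H T σ _ hH1 hH l l' u u' hT hl hl' hu hu' hTu hTu' (by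
    have h3 := hle (QuotientGroup.eq.1 h)
    rw [MonoidHom.mem_ker, map_mul, map_inv] at h3
    exact (inv_mul_eq_one.1 h3))
  rw [hσ, hσ] at h2
  exact QuotientGroup.eq.1 h2

/-- Many elements of `F/R'`. -/
lemma many {m : ℕ} (R : Subgroup (FreeGroup (Fin m))) [R.Normal]
    (φ : FreeGroup (Fin m) → ℤ)
    (hφ : ∀ x y : FreeGroup (Fin m), φ (x * y) = φ x + φ y)
    (hker : ∀ g ∈ R, φ g = 0) (T : ℤ) (hT : 0 ≤ T) (N : ℕ)
    (S : Finset (List (Fin m × Bool)))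
    (hS1 : ∀ u ∈ S, u.length = N) (hS2 : ∀ u ∈ S, ht (fun i => φ (FreeGroup.of i)) u = T)
    (hS3 : ∀ u ∈ S, sufH (fun i => φ (FreeGroup.of i)) (fun z => 0 < z ∧ z ≤ T) 0 u)
    (hS4 : ∀ u ∈ S, ∀ u' ∈ S, (FreeGroup.mk u)⁻¹ * FreeGroup.mk u' ∈ R → u = u') (k : ℕ) :
    ∃ B : Finset (List (Fin m × Bool)), B.card = S.card ^ k ∧
      (∀ l ∈ B, l.length = k * N ∧ sufH (fun i => φ (FreeGroup.of i)) (0 < ·) 0 l) ∧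
      Set.InjOn (fun l => (QuotientGroup.mk (FreeGroup.mk l) : FreeGroup (Fin m) ⧸ ⁅R, R⁆)) B := by
  classical
  induction k with
  | zero => exact ⟨{[]}, by simp, by simp [sufH], by simp⟩
  | succ k ih =>
    obtain ⟨B, hB1, hB2, hB3⟩ := ih
    have key : ∀ l ∈ B, ∀ l' ∈ B, ∀ u ∈ S, ∀ u' ∈ S,
        (QuotientGroup.mk (FreeGroup.mk (l ++ u)) : FreeGroup (Fin m) ⧸ ⁅R, R⁆) =
        QuotientGroup.mk (FreeGroup.mk (l' ++ u')) → l = l' ∧ u = u' := by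
      intro l hl l' hl' u hu u' hu' h
      have e : u = u' := hS4 u hu u' hu' (decode R φ hφ hker T hT l l' u u' (hB2 l hl).2
        (hB2 l' hl').2 (sufH_mono _ _ _ _ _ (fun z hz => hz.2) _ (hS3 u hu))
        (sufH_mono _ _ _ _ _ (fun z hz => hz.2) _ (hS3 u' hu')) (hS2 u hu) (hS2 u' hu') h)
      subst e
      refine ⟨hB3 hl hl' ?_, rfl⟩
      rw [← FreeGroup.mul_mk, ← FreeGroup.mul_mk, QuotientGroup.mk_mul, QuotientGroup.mk_mul] at h
      exact mul_right_cancel h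
    refine ⟨(B ×ˢ S).image (fun p => p.1 ++ p.2), ?_, ?_, ?_⟩
    · rw [Finset.card_image_of_injOn, Finset.card_product, hB1, pow_succ]
      rintro ⟨l, u⟩ h1 ⟨l', u'⟩ h2 h
      simp only [Finset.coe_product, Set.mem_prod, Finset.mem_coe] at h1 h2 h
      have := key l h1.1 l' h2.1 u h1.2 u' h2.2 (by rw [h])
      rw [this.1, this.2]
    · intro l hl
      simp only [Finset.mem_image, Finset.mem_product] at hl
      obtain ⟨⟨p, u⟩, ⟨hp, hu⟩, rfl⟩ := hl
      refine ⟨by simp [(hB2 p hp).1, hS1 u hu]; ring, ?_⟩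
      rw [sufH_append]
      refine ⟨sufH_mono _ _ _ _ _ (fun z hz => ?_) _ (hB2 p hp).2,
        sufH_mono _ _ _ _ _ (fun z hz => hz.1) _ (hS3 u hu)⟩
      simp only [hS2 u hu]; omega
    · intro a ha b hb h
      simp only [Finset.coe_image, Set.mem_image, Finset.coe_product, Set.mem_prod, Finset.mem_coe,
        Prod.exists] at ha hb
      obtain ⟨l, u, ⟨h1, h2⟩, rfl⟩ := ha
      obtain ⟨l', u', ⟨h1', h2'⟩, rfl⟩ := hb
      have := key l h1 l' h1' u h2 u' h2' h
      rw [this.1, this.2]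

/-! ### Counting reduced words -/

/-- words `e` of length `n` such that `e ++ [x]` is reduced -/
def redX {m : ℕ} : ℕ → Fin m × Bool → Finset (List (Fin m × Bool))
  | 0, _ => {[]}
  | n + 1, x => (Finset.univ.erase (x.1, !x.2)).biUnion fun y => (redX n y).image (· ++ [y])

lemma card_redX {m : ℕ} (n : ℕ) (x : Fin m × Bool) : (redX n x).card = (2 * m - 1) ^ n := by
  induction n generalizing x with
  | zero => simp [redX]
  | succ n ih =>
    rw [redX, Finset.card_biUnion]
    · rw [Finset.sum_congr rfl (g := fun _ => (2 * m - 1) ^ n)]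
      · simp [Finset.card_erase_of_mem, mul_comm m 2]; ring
      · intro y _
        rw [Finset.card_image_of_injective _ (List.append_left_injective [y]), ih]
    · intro y _ z _ hyz
      rw [Function.onFun, Finset.disjoint_left]
      intro a ha hb
      simp only [Finset.mem_image] at ha hb
      obtain ⟨e, _, rfl⟩ := ha
      obtain ⟨e', _, h⟩ := hb
      have := (List.append_inj' h rfl).2
      simp at this
      exact hyz this.symm

lemma mem_redX {m : ℕ} (n : ℕ) (x : Fin m × Bool) (e) (he : e ∈ redX n x) :
    e.length = n ∧ FreeGroup.IsReduced (e ++ [x]) := by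
  induction n generalizing x e with
  | zero => simp [redX] at he; subst he; simp
  | succ n ih =>
    simp only [redX, Finset.mem_biUnion, Finset.mem_image, Finset.mem_erase] at he
    obtain ⟨y, ⟨hy, _⟩, e', he', rfl⟩ := he
    obtain ⟨h1, h2⟩ := ih y e' he'
    refine ⟨by simp [h1], FreeGroup.IsReduced.append_overlap h2 ?_ (by simp)⟩
    simp only [List.cons_append, List.nil_append, FreeGroup.isReduced_cons_cons]
    refine ⟨fun h => ?_, FreeGroup.IsReduced.singleton⟩
    by_contra h'
    apply hy
    ext1
    · exact h
    · simp only; revert h'; cases y.2 <;> cases x.2 <;> simp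

lemma redX_complete {m : ℕ} (e : List (Fin m × Bool)) :
    ∀ x, FreeGroup.IsReduced (e ++ [x]) → e ∈ redX e.length x := by
  induction e using List.reverseRecOn with
  | nil => intro x _; simp [redX]
  | append_singleton e y ih =>
    intro x hx
    simp only [List.length_append, List.length_singleton, redX, Finset.mem_biUnion,
      Finset.mem_image, Finset.mem_erase]
    refine ⟨y, ⟨?_, Finset.mem_univ _⟩, e, ih y (hx.infix ⟨[], [x], by simp⟩), rfl⟩
    have h : FreeGroup.IsReduced [y, x] := hx.infix ⟨e, [], by simp⟩
    simp only [FreeGroup.isReduced_cons_cons] at h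
    rintro rfl
    simpa using h.1 rfl

/-- a finset containing all reduced words of length at most `n` -/
def redU {m : ℕ} (n : ℕ) : Finset (List (Fin m × Bool)) :=
  insert [] ((Finset.range n ×ˢ Finset.univ).biUnion
    fun p : ℕ × (Fin m × Bool) => (redX p.1 p.2).image (· ++ [p.2]))

lemma card_redU {m : ℕ} (hm : 1 ≤ m) (n : ℕ) :
    (redU (m := m) n).card ≤ n * (2 * m) * (2 * m - 1) ^ n + 1 := by
  refine (Finset.card_insert_le _ _).trans (Nat.add_le_add_right ?_ 1)
  refine (Finset.card_biUnion_le_card_mul _ _ ((2 * m - 1) ^ n) ?_).trans ?_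
  · rintro ⟨k, x⟩ h
    refine Finset.card_image_le.trans ?_
    rw [card_redX]
    simp only [Finset.mem_product, Finset.mem_range] at h
    exact Nat.pow_le_pow_right (by omega) h.1.le
  · simp [mul_comm m 2]

lemma mem_redU {m : ℕ} (n : ℕ) (l : List (Fin m × Bool)) (hl : FreeGroup.IsReduced l)
    (hn : l.length ≤ n) : l ∈ redU n := by
  rcases List.eq_nil_or_concat l with rfl | ⟨e, x, rfl⟩
  · simp [redU]
  · simp only [redU, Finset.mem_insert, Finset.mem_biUnion, Finset.mem_image, Finset.mem_product]
    refine Or.inr ⟨(e.length, x), ⟨?_, Finset.mem_univ _⟩, e, redX_complete e x (by simpa using hl), by simp⟩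
    simp at hn ⊢; omega

lemma wordEval_eq {m : ℕ} {G : Type*} [Group G] (σ : Fin m → G) (w : List (Fin m × Bool)) :
    wordEval σ w = FreeGroup.lift σ (FreeGroup.mk w) := by
  rw [FreeGroup.lift_mk, wordEval]
  congr 1
  apply List.map_congr_left
  rintro ⟨i, b⟩ _
  cases b <;> simp

lemma ball_finite {m : ℕ} {G : Type*} [Group G] (σ : Fin m → G) (n : ℕ) : (ball σ n).Finite :=
  (List.finite_length_le (Fin m × Bool) n).image (wordEval σ) |>.subset
    (by rintro g ⟨w, hw, rfl⟩; exact ⟨w, hw, rfl⟩)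

lemma ball_card {m : ℕ} (hm : 1 ≤ m) {G : Type*} [Group G] (σ : Fin m → G) (n : ℕ) :
    (ball σ n).ncard ≤ n * (2 * m) * (2 * m - 1) ^ n + 1 := by
  classical
  refine le_trans ?_ (card_redU hm n)
  have : ball σ n ⊆ ((redU n).image (wordEval σ) : Finset G) := by
    rintro g ⟨w, hw, rfl⟩
    rw [Finset.mem_coe, Finset.mem_image]
    refine ⟨FreeGroup.reduce w, mem_redU n _ ?_ (le_trans ?_ hw), ?_⟩
    · rw [FreeGroup.isReduced_iff_reduce_eq]; exact FreeGroup.reduce.idem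
    · exact FreeGroup.reduce.red.length_le
    · rw [wordEval_eq, wordEval_eq, FreeGroup.reduce.self]
  calc (ball σ n).ncard ≤ ((redU n).image (wordEval σ) : Finset G).card := by
        rw [← Set.ncard_coe_finset]
        exact Set.ncard_le_ncard this (Finset.finite_toSet _)
    _ ≤ _ := Finset.card_image_le

/-- inverting all letters -/
def flipL {m : ℕ} (l : List (Fin m × Bool)) : List (Fin m × Bool) := l.map fun x => (x.1, !x.2)

lemma ht_flipL {m : ℕ} (f : Fin m → ℤ) (l : List (Fin m × Bool)) : ht f (flipL l) = - ht f l := by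
  induction l with
  | nil => simp [flipL]
  | cons x l ih =>
    have : flipL (x :: l) = (x.1, !x.2) :: flipL l := rfl
    rw [this, ht_cons, ht_cons, ih]
    obtain ⟨i, b⟩ := x
    cases b <;> simp [lval] <;> ring

lemma red_flipL {m : ℕ} (l : List (Fin m × Bool)) (h : FreeGroup.IsReduced l) :
    FreeGroup.IsReduced (flipL l) := by
  apply List.isChain_map_of_isChain _ _ h
  intro a b hab h'
  simp at h' ⊢
  exact hab h'

lemma flipL_inj {m : ℕ} : Function.Injective (flipL (m := m)) := by
  apply List.map_injective_iff.2
  rintro ⟨i, b⟩ ⟨j, c⟩ h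
  simpa using h

lemma ht_bound {m : ℕ} (f : Fin m → ℤ) (M : ℕ) (hM : ∀ i, |f i| ≤ M) (l : List (Fin m × Bool)) :
    |ht f l| ≤ M * l.length := by
  induction l with
  | nil => simp
  | cons x l ih =>
    have : |lval f x| ≤ M := by unfold lval; split_ifs <;> simp [hM]
    rw [ht_cons, List.length_cons]
    push_cast
    calc _ ≤ |lval f x| + |ht f l| := abs_add_le _ _
      _ ≤ _ := by linarith

lemma sufH_bound {m : ℕ} (f : Fin m → ℤ) (M : ℕ) (hM : ∀ i, |f i| ≤ M) (l : List (Fin m × Bool))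
    (c : ℤ) (b : ℤ) (hb : |c| + M * l.length ≤ b) : sufH f (|·| ≤ b) c l := by
  induction l with
  | nil => trivial
  | cons x l ih =>
    have h1 := ht_bound f M hM (x :: l)
    refine ⟨(abs_add_le _ _).trans (by linarith), ih (le_trans ?_ hb)⟩
    rw [List.length_cons]; push_cast; nlinarith

lemma exists_A {m : ℕ} (hm : 2 ≤ m) (f : Fin m → ℤ) (M : ℕ) (hM : ∀ i, |f i| ≤ M) (n t : ℕ) :
    ∃ A : Finset (List (Fin m × Bool)), A.card = ((2 * m - 1) ^ n) ^ t ∧ ∀ l ∈ A,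
      l.length = 1 + t * (n + 1) ∧ FreeGroup.IsReduced l ∧ |ht f l| ≤ M * (n + 1) ∧
      sufH f (|·| ≤ 2 * (M * (n + 1))) 0 l := by
  have hMn : (M : ℤ) ≤ M * (n + 1) := by nlinarith
  induction t with
  | zero =>
    refine ⟨{[(⟨0, by omega⟩, true)]}, by simp, ?_⟩
    intro l hl
    rw [Finset.mem_singleton] at hl
    subst hl
    have := hM ⟨0, by omega⟩
    refine ⟨by simp, FreeGroup.IsReduced.singleton, ?_, ?_⟩
    · simp [lval]; linarith
    · simp [sufH, lval]; linarith
  | succ t ih =>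
    obtain ⟨A, hA1, hA2⟩ := ih
    have hi : ∀ l : List (Fin m × Bool), ∃ i : Fin m, ∀ x ∈ l.head?, i ≠ x.1 := by
      intro l
      cases l with
      | nil => exact ⟨⟨0, by omega⟩, by simp⟩
      | cons x l =>
        haveI : Nontrivial (Fin m) := Fin.nontrivial_iff_two_le.2 hm
        obtain ⟨i, hi⟩ := exists_ne x.1
        exact ⟨i, by simpa using hi⟩
    choose ι hι using hi
    let w : List (Fin m × Bool) → List (Fin m × Bool) → List (Fin m × Bool) := fun l e =>
      if (0 ≤ ht f (e ++ [(ι l, true)]) ∧ 0 ≤ ht f l) ∨ (ht f (e ++ [(ι l, true)]) ≤ 0 ∧ ht f l ≤ 0)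
      then flipL (e ++ [(ι l, true)]) else e ++ [(ι l, true)]
    have hwlen : ∀ l e, (w l e).length = e.length + 1 := by
      intro l e
      simp only [w]; split_ifs <;> simp [flipL]
    have hwinj : ∀ l e e', w l e = w l e' → e = e' := by
      intro l e e' h
      simp only [w] at h
      split_ifs at h
      · exact List.append_cancel_right (flipL_inj h)
      · simp only [flipL, List.map_append] at h
        have := (List.append_inj' h rfl).2
        simp at this
      · simp only [flipL, List.map_append] at h
        have := (List.append_inj' h rfl).2
        simp at this
      · exact List.append_cancel_right h
    have hwred : ∀ l e, FreeGroup.IsReduced (e ++ [(ι l, true)]) → FreeGroup.IsReduced l →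
        FreeGroup.IsReduced (w l e ++ l) := by
      intro l e he hl
      have h0 : ∀ b, FreeGroup.IsReduced ([(ι l, b)] ++ l) := by
        intro b
        have := hι l
        cases l with
        | nil => simp
        | cons x l =>
          simp only [List.cons_append, List.nil_append, FreeGroup.isReduced_cons_cons]
          exact ⟨fun h => absurd h (this x (by simp)), hl⟩
      simp only [w]
      split_ifs
      · have h1 := red_flipL _ he
        simp only [flipL, List.map_append, List.map_cons, List.map_nil] at h1 ⊢
        exact FreeGroup.IsReduced.append_overlap h1 (h0 _) (by simp)
      · exact FreeGroup.IsReduced.append_overlap he (h0 _) (by simp)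
    have hwht : ∀ l e, |ht f l| ≤ M * (n + 1) → e.length = n → |ht f (w l e ++ l)| ≤ M * (n + 1) := by
      intro l e hl he
      have h1 := ht_bound f M hM (e ++ [(ι l, true)])
      rw [List.length_append, List.length_singleton, he] at h1
      push_cast at h1
      simp only [w, ht_append] at h1 ⊢
      generalize (M : ℤ) * (n + 1) = Z at *
      rw [abs_le] at *
      split_ifs with h
      · rw [ht_flipL, ht_append]
        omega
      · rw [ht_append]
        omega
    refine ⟨A.biUnion fun l => (redX n (ι l, true)).image fun e => w l e ++ l, ?_, ?_⟩
    · rw [Finset.card_biUnion]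
      · rw [Finset.sum_congr rfl (g := fun _ => (2 * m - 1) ^ n)]
        · simp [hA1, pow_succ]
        · intro l _
          rw [Finset.card_image_of_injective, card_redX]
          intro e e' h
          exact hwinj l e e' (List.append_cancel_right h)
      · intro l hl l' hl' hne
        rw [Function.onFun, Finset.disjoint_left]
        intro a ha hb
        simp only [Finset.mem_image] at ha hb
        obtain ⟨e, _, rfl⟩ := ha
        obtain ⟨e', _, h⟩ := hb
        exact hne (List.append_inj' h (by rw [(hA2 l hl).1, (hA2 l' hl').1])).2.symm
    · intro a ha
      simp only [Finset.mem_biUnion, Finset.mem_image] at ha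
      obtain ⟨l, hl, e, he, rfl⟩ := ha
      obtain ⟨he1, he2⟩ := mem_redX _ _ _ he
      obtain ⟨h1, h2, h3, h4⟩ := hA2 l hl
      refine ⟨by rw [List.length_append, hwlen, he1, h1]; ring, hwred l e he2 h2,
        hwht l e h3 he1, ?_⟩
      rw [sufH_append]
      refine ⟨sufH_bound f M hM _ _ _ ?_, h4⟩
      rw [hwlen, he1, zero_add]; push_cast; linarith

lemma ht_replicate {m : ℕ} (f : Fin m → ℤ) (s : Fin m × Bool) (j : ℕ) :
    ht f (List.replicate j s) = j * lval f s := by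
  simp [ht]

lemma sufH_replicate {m : ℕ} (f : Fin m → ℤ) (s : Fin m × Bool) (hs : 0 < lval f s) (T c : ℤ)
    (hc : 0 ≤ c) (j : ℕ) (hT : c + j * lval f s ≤ T) :
    sufH f (fun z => 0 < z ∧ z ≤ T) c (List.replicate j s) := by
  induction j with
  | zero => trivial
  | succ j ih =>
    push_cast at hT
    rw [List.replicate_succ]
    refine ⟨?_, ih (by linarith)⟩
    rw [ht_cons, ht_replicate]
    have : 0 ≤ j * lval f s := by positivity
    constructor <;> linarith

lemma mk_inj_red {m : ℕ} (l l' : List (Fin m × Bool)) (h : FreeGroup.IsReduced l)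
    (h' : FreeGroup.IsReduced l') (e : FreeGroup.mk l = FreeGroup.mk l') : l = l' := by
  have := congrArg FreeGroup.toWord e
  rwa [FreeGroup.toWord_mk, FreeGroup.toWord_mk, h.reduce_eq, h'.reduce_eq] at this

lemma exists_S {m : ℕ} (hm : 2 ≤ m) (f : Fin m → ℤ) (i₀ : Fin m) (hi₀ : f i₀ ≠ 0) (r : ℝ)
    (hr1 : 1 ≤ r) (hr : r < 2 * m - 1) :
    ∃ (N : ℕ) (T : ℤ) (S : Finset (List (Fin m × Bool))), 0 < N ∧ 0 ≤ T ∧ r ^ N ≤ S.card ∧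
      (∀ u ∈ S, u.length = N) ∧ (∀ u ∈ S, ht f u = T) ∧
      (∀ u ∈ S, sufH f (fun z => 0 < z ∧ z ≤ T) 0 u) ∧
      (∀ u ∈ S, ∀ u' ∈ S, FreeGroup.mk u = FreeGroup.mk u' → u = u') := by
  classical
  obtain ⟨s, hs⟩ : ∃ s : Fin m × Bool, 0 < lval f s := by
    rcases lt_or_gt_of_ne hi₀ with h | h
    · exact ⟨(i₀, false), by simpa [lval] using h⟩
    · exact ⟨(i₀, true), by simpa [lval] using h⟩
  obtain ⟨M, hM⟩ : ∃ M : ℕ, ∀ i, |f i| ≤ M := by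
    refine ⟨∑ i, (f i).natAbs, fun i => ?_⟩
    rw [Int.abs_eq_natAbs]
    exact_mod_cast Finset.single_le_sum (f := fun i => (f i).natAbs) (fun _ _ => Nat.zero_le _)
      (Finset.mem_univ i)
  set q : ℝ := 2 * m - 1 with hq
  have hqpos : 0 < q := by linarith
  have hqn : ((2 * m - 1 : ℕ) : ℝ) = q := by rw [Nat.cast_sub (by omega)]; push_cast; rfl
  -- choice of n
  obtain ⟨n, hn⟩ : ∃ n : ℕ, r ^ (n + 1) < q ^ n := by
    have h1 : r / q < 1 := (div_lt_one hqpos).2 hr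
    obtain ⟨n, hn⟩ := exists_pow_lt_of_lt_one (show (0 : ℝ) < 1 / r by positivity) h1
    refine ⟨n, ?_⟩
    rw [div_pow, div_lt_div_iff₀ (by positivity) (by positivity)] at hn
    rw [pow_succ]; linarith
  set C : ℕ := M * (n + 1) with hC
  set K : ℕ := 2 * C + 1 with hK
  obtain ⟨t, ht'⟩ : ∃ t : ℕ, (2 * C + 1 : ℝ) * r ^ (1 + 4 * K) * (r ^ (n + 1)) ^ t ≤ (q ^ n) ^ t := by
    have h1 : 1 < q ^ n / r ^ (n + 1) := (one_lt_div (by positivity)).2 hn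
    obtain ⟨t, h⟩ := pow_unbounded_of_one_lt ((2 * C + 1 : ℝ) * r ^ (1 + 4 * K)) h1
    refine ⟨t, ?_⟩
    rw [div_pow, lt_div_iff₀ (by positivity)] at h
    exact h.le
  obtain ⟨A, hA1, hA2⟩ := exists_A hm f M hM n t
  have hCz : (M : ℤ) * (n + 1) = C := by rw [hC]; push_cast; rfl
  rw [hCz] at hA2
  obtain ⟨v, hv, hvc⟩ := Finset.exists_le_card_fiber_of_nsmul_le_card_of_maps_to
    (s := A) (t := Finset.Icc (-(C : ℤ)) C) (f := ht f) (b := r ^ (1 + t * (n + 1) + 4 * K))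
    (fun a ha => by have := (hA2 a ha).2.2.1; rw [abs_le] at this; simpa using this)
    ⟨0, by simp⟩ (by
      have : (C : ℤ) + 1 - -C = ((2 * C + 1 : ℕ) : ℤ) := by push_cast; ring
      rw [Int.card_Icc, this, Int.toNat_natCast, nsmul_eq_mul, hA1]
      push_cast
      rw [hqn]
      refine le_trans (le_of_eq ?_) ht'
      rw [← pow_mul, mul_assoc, ← pow_add]
      ring_nf)
  set a := lval f s with ha
  rw [Finset.mem_Icc] at hv
  have hKa : (K : ℤ) ≤ K * a := by nlinarith
  have hKz : (K : ℤ) = 2 * C + 1 := by rw [hK]; push_cast; rfl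
  have hinj : Function.Injective (fun l : List (Fin m × Bool) =>
      List.replicate (3 * K) s ++ l ++ List.replicate K s) := by
    intro l l' h
    exact List.append_cancel_left (List.append_cancel_right h)
  refine ⟨1 + t * (n + 1) + 4 * K, 4 * (K * a) + v, (A.filter (fun l => ht f l = v)).image
    (fun l => List.replicate (3 * K) s ++ l ++ List.replicate K s), by omega, by omega, ?_, ?_,
    ?_, ?_, ?_⟩
  · rw [Finset.card_image_of_injective _ hinj]
    exact hvc
  · intro u hu
    simp only [Finset.mem_image, Finset.mem_filter] at hu
    obtain ⟨l, ⟨hl, _⟩, rfl⟩ := hu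
    simp [(hA2 l hl).1]; ring
  · intro u hu
    simp only [Finset.mem_image, Finset.mem_filter] at hu
    obtain ⟨l, ⟨hl, hlv⟩, rfl⟩ := hu
    simp only [ht_append, ht_replicate, hlv, ← ha]; push_cast; ring
  · intro u hu
    simp only [Finset.mem_image, Finset.mem_filter] at hu
    obtain ⟨l, ⟨hl, hlv⟩, rfl⟩ := hu
    rw [sufH_append, sufH_append, ht_replicate, ← ha, hlv]
    refine ⟨⟨?_, ?_⟩, ?_⟩
    · apply sufH_replicate f s hs
      · omega
      · rw [← ha]; push_cast; linarith
    · refine sufH_mono _ _ _ _ _ (fun z hz => ?_) _ (hA2 l hl).2.2.2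
      rw [abs_le] at hz
      constructor <;> omega
    · apply sufH_replicate f s hs _ _ le_rfl
      rw [← ha]; omega
  · intro u hu u' hu' h
    simp only [Finset.mem_image, Finset.mem_filter] at hu hu'
    obtain ⟨l, ⟨hl, _⟩, rfl⟩ := hu
    obtain ⟨l', ⟨hl', _⟩, rfl⟩ := hu'
    simp only [← FreeGroup.mul_mk] at h
    have h := mul_left_cancel (mul_right_cancel h)
    rw [mk_inj_red l l' (hA2 l hl).2.1 (hA2 l' hl').2.1 h]

/-! ### Growth rates -/

lemma upper_tendsto (m : ℕ) (hm : 2 ≤ m) :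
    Filter.Tendsto (fun n : ℕ => (4 * (m : ℝ)) ^ (1 / (n : ℝ)) * ((n : ℝ) ^ (1 / (n : ℝ))) *
      (2 * (m : ℝ) - 1)) Filter.atTop (nhds (2 * (m : ℝ) - 1)) := by
  have h1 : Filter.Tendsto (fun n : ℕ => (4 * (m : ℝ)) ^ (1 / (n : ℝ))) Filter.atTop (nhds 1) := by
    have := (tendsto_const_nhds (x := 4 * (m : ℝ))).rpow tendsto_one_div_atTop_nhds_zero_nat
      (Or.inl (by positivity))
    simpa using this
  have h2 : Filter.Tendsto (fun n : ℕ => ((n : ℝ) ^ (1 / (n : ℝ)))) Filter.atTop (nhds 1) :=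
    tendsto_rpow_div.comp tendsto_natCast_atTop_atTop
  simpa using (h1.mul h2).mul_const (2 * (m : ℝ) - 1)

lemma term_le {m : ℕ} (hm : 2 ≤ m) {G : Type*} [Group G] (σ : Fin m → G) (n : ℕ) (hn : 1 ≤ n) :
    ((ball σ n).ncard : ℝ) ^ (1 / (n : ℝ)) ≤ (4 * (m : ℝ)) ^ (1 / (n : ℝ)) *
      ((n : ℝ) ^ (1 / (n : ℝ))) * (2 * (m : ℝ) - 1) := by
  have hm' : (2 : ℝ) ≤ m := by exact_mod_cast hm
  have hn' : (1 : ℝ) ≤ n := by exact_mod_cast hn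
  have hq : ((2 * m - 1 : ℕ) : ℝ) = 2 * (m : ℝ) - 1 := by
    rw [Nat.cast_sub (by omega)]; push_cast; rfl
  have h1 : ((ball σ n).ncard : ℝ) ≤ (4 * m) * n * (2 * (m : ℝ) - 1) ^ n := by
    have h := ball_card (by omega : 1 ≤ m) σ n
    have h' : ((ball σ n).ncard : ℝ) ≤ n * (2 * m) * (2 * (m : ℝ) - 1) ^ n + 1 := by
      rw [← hq]; exact_mod_cast h
    have h2 : (1 : ℝ) ≤ (2 * (m : ℝ) - 1) ^ n := one_le_pow₀ (by linarith)
    have h3 : (1 : ℝ) ≤ n * (2 * m) := by nlinarith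
    nlinarith
  have h0 : (0 : ℝ) ≤ 2 * (m : ℝ) - 1 := by linarith
  calc _ ≤ ((4 * m) * n * (2 * (m : ℝ) - 1) ^ n) ^ (1 / (n : ℝ)) :=
        Real.rpow_le_rpow (by positivity) h1 (by positivity)
    _ = _ := by
        rw [Real.mul_rpow (by positivity) (by positivity), Real.mul_rpow (by positivity) (by positivity)]
        congr 1
        rw [one_div, Real.pow_rpow_inv_natCast h0 (by omega)]

lemma term_bdd {m : ℕ} (hm : 2 ≤ m) {G : Type*} [Group G] (σ : Fin m → G) :
    Filter.IsBoundedUnder (· ≤ ·) Filter.atTop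
      (fun n : ℕ => ((ball σ n).ncard : ℝ) ^ (1 / (n : ℝ))) :=
  (upper_tendsto m hm).isBoundedUnder_le.mono_le
    (Filter.eventually_atTop.2 ⟨1, fun n hn => term_le hm σ n hn⟩)

lemma growthRate_le {m : ℕ} (hm : 2 ≤ m) {G : Type*} [Group G] (σ : Fin m → G) :
    growthRate σ ≤ 2 * (m : ℝ) - 1 := by
  rw [← (upper_tendsto m hm).limsup_eq]
  refine Filter.limsup_le_limsup (Filter.eventually_atTop.2 ⟨1, fun n hn => term_le hm σ n hn⟩) ?_
    (upper_tendsto m hm).isBoundedUnder_le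
  exact Filter.IsBoundedUnder.isCoboundedUnder_le
    (Filter.isBoundedUnder_of ⟨0, fun n => Real.rpow_nonneg (Nat.cast_nonneg _) _⟩)

lemma le_growthRate {m : ℕ} (hm : 2 ≤ m) {G : Type*} [Group G] (σ : Fin m → G) (r : ℝ) (hr : 0 ≤ r)
    (N : ℕ) (hN : 0 < N) (h : ∀ k : ℕ, r ^ (k * N) ≤ ((ball σ (k * N)).ncard : ℝ)) :
    r ≤ growthRate σ := by
  refine Filter.le_limsup_of_frequently_le ?_ (term_bdd hm σ)
  rw [Filter.frequently_atTop]
  intro a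
  refine ⟨(a + 1) * N, by nlinarith, ?_⟩
  have h1 := Real.rpow_le_rpow (by positivity) (h (a + 1))
    (by positivity : 0 ≤ 1 / (((a + 1) * N : ℕ) : ℝ))
  rwa [one_div, Real.pow_rpow_inv_natCast hr (Nat.mul_ne_zero (Nat.succ_ne_zero a) hN.ne'), ← one_div] at h1

/-- Theorem 2. Let `φ : F_m → ℤ` be a surjective homomorphism and let
`ker φ ≥ R₁ ≥ R₂ ≥ ⋯` be a descending sequence of normal subgroups of `F_m` with trivial
intersection. Then `ω(F_m/Rₙ', A) → 2m - 1` as `n → ∞`, where the growth rate is taken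
with respect to the images of the free basis `A`. -/
theorem growth_rates_tendsto_of_chain (m : ℕ) (hm : 2 ≤ m)
    (φ : FreeGroup (Fin m) → ℤ)
    (hφ : ∀ x y : FreeGroup (Fin m), φ (x * y) = φ x + φ y)
    (hsurj : Function.Surjective φ)
    (R : ℕ → Subgroup (FreeGroup (Fin m))) [∀ n, (R n).Normal]
    (hker : ∀ n, ∀ g ∈ R n, φ g = 0)
    (hdesc : ∀ n, R (n + 1) ≤ R n)
    (htriv : (⨅ n, R n) = ⊥) :
    Filter.Tendsto
      (fun n : ℕ => growthRate (fun i =>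
        (QuotientGroup.mk (FreeGroup.of i) : FreeGroup (Fin m) ⧸ ⁅R n, R n⁆)))
      Filter.atTop (nhds (2 * (m : ℝ) - 1)) := by
  classical
  have hφ1 : φ 1 = 0 := by have := hφ 1 1; simp at this; exact this
  have hφi : ∀ x, φ x⁻¹ = - φ x := fun x => by
    have := hφ x⁻¹ x; simp [hφ1] at this; omega
  have hanti : Antitone R := antitone_nat_of_succ_le hdesc
  obtain ⟨i₀, hi₀⟩ : ∃ i, φ (FreeGroup.of i) ≠ 0 := by
    by_contra! hcon
    have hz : ∀ w, φ w = 0 := by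
      intro w
      induction w using FreeGroup.induction_on with
      | C1 => exact hφ1
      | of i => exact hcon i
      | inv_of i _ => rw [hφi, hcon]; rfl
      | mul x y hx hy => rw [hφ, hx, hy]; rfl
    obtain ⟨w, hw⟩ := hsurj 1
    rw [hz] at hw
    exact zero_ne_one hw
  have hm' : (2 : ℝ) ≤ m := by exact_mod_cast hm
  rw [tendsto_order]
  refine ⟨fun a ha => ?_, fun a ha => Filter.Eventually.of_forall fun n =>
    lt_of_le_of_lt (growthRate_le hm _) ha⟩
  obtain ⟨r, hr1, hr2⟩ := exists_between (max_lt ha (by linarith : (1 : ℝ) < 2 * (m : ℝ) - 1))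
  have hra : a < r := lt_of_le_of_lt (le_max_left _ _) hr1
  have hr1 : 1 ≤ r := ((le_max_right _ _).trans_lt hr1).le
  obtain ⟨N, T, S, hN, hT, hScard, hS1, hS2, hS3, hS4⟩ :=
    exists_S hm (fun i => φ (FreeGroup.of i)) i₀ hi₀ r hr1 hr2
  have hev : ∀ᶠ n in Filter.atTop, ∀ p ∈ S ×ˢ S,
      (FreeGroup.mk p.1)⁻¹ * FreeGroup.mk p.2 ∈ R n → p.1 = p.2 := by
    rw [Filter.eventually_all_finset]
    rintro ⟨u, u'⟩ hp
    rw [Finset.mem_product] at hp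
    by_cases e : u = u'
    · exact Filter.Eventually.of_forall fun n _ => e
    · have hne : (FreeGroup.mk u)⁻¹ * FreeGroup.mk u' ∉ ⨅ n, R n := by
        rw [htriv, Subgroup.mem_bot, inv_mul_eq_one]
        exact fun h => e (hS4 u hp.1 u' hp.2 h)
      rw [Subgroup.mem_iInf] at hne
      push Not at hne
      obtain ⟨n₀, hn₀⟩ := hne
      exact Filter.eventually_atTop.2 ⟨n₀, fun n hn h => absurd (hanti hn h) hn₀⟩
  filter_upwards [hev] with n hn
  refine lt_of_lt_of_le hra (le_growthRate hm _ r (by linarith) N hN fun k => ?_)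
  obtain ⟨B, hB1, hB2, hB3⟩ := many (R n) φ hφ (hker n) T hT N S hS1 hS2 hS3
    (fun u hu u' hu' h => hn (u, u') (Finset.mem_product.2 ⟨hu, hu'⟩) h) k
  have hlift : ∀ w, FreeGroup.lift (fun i =>
      (QuotientGroup.mk (FreeGroup.of i) : FreeGroup (Fin m) ⧸ ⁅R n, R n⁆)) w =
      QuotientGroup.mk w := by
    intro w
    have : FreeGroup.lift (fun i =>
      (QuotientGroup.mk (FreeGroup.of i) : FreeGroup (Fin m) ⧸ ⁅R n, R n⁆)) =
      QuotientGroup.mk' ⁅R n, R n⁆ := by ext i; simp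
    rw [this]; rfl
  have hcard : B.card ≤ (ball (fun i =>
      (QuotientGroup.mk (FreeGroup.of i) : FreeGroup (Fin m) ⧸ ⁅R n, R n⁆)) (k * N)).ncard := by
    rw [← Finset.card_image_of_injOn hB3, ← Set.ncard_coe_finset]
    refine Set.ncard_le_ncard ?_ (ball_finite _ _)
    intro g hg
    rw [Finset.mem_coe, Finset.mem_image] at hg
    obtain ⟨l, hl, rfl⟩ := hg
    exact ⟨l, (hB2 l hl).1.le, by rw [wordEval_eq, hlift]⟩
  calc r ^ (k * N) = (r ^ N) ^ k := by rw [← pow_mul, mul_comm]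
    _ ≤ (S.card : ℝ) ^ k := by gcongr
    _ = (B.card : ℝ) := by rw [hB1]; push_cast; rfl
    _ ≤ _ := by exact_mod_cast hcard
end
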